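/- arXiv:math/0304189 — 4 statements merged into one kernel-verified Lean document; each statement's English description precedes it below -/
import Mathlib

section
/- (Addition formula / Weierstrass three-term identity for theta functions.) For all nonzero complex numbers x, y, z, w one has θ(xy)θ(x/y)θ(zw)θ(z/w) = θ(xw)θ(x/w)θ(zy)θ(z/y) + (z/y)·θ(xz)θ(x/z)θ(yw)θ(y/w). -/
noncomputable section

open Finset

/-- The normalized Jacobi theta function `θ(z) = ∏_{j≥0} (1 - z p^j)(1 - p^{j+1}/z)`. -/
def theta (p : ℝ) (z : ℂ) : ℂ :=
  ∏' j : ℕ, ((1 - z * (p : ℂ) ^ j) * (1 - (p : ℂ) ^ (j + 1) / z))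

/-- Complex power `q ^ l := exp (l · log q)` for a real base `q`. -/
def qp (q : ℝ) (l : ℂ) : ℂ := Complex.exp (l * (Real.log q : ℂ))

/-- Elliptic Pochhammer symbol `(a)_n = ∏_{i=0}^{n-1} θ(a q^{2i})` in base `q², p`. -/
def epoch (p q : ℝ) (a : ℂ) (n : ℕ) : ℂ :=
  ∏ i ∈ Finset.range n, theta p (a * qp q (2 * (i : ℂ)))

/-- Elliptic binomial coefficient `[k over l] = ∏_{i=1}^{l} θ(q^{2(k-l+i)})/θ(q^{2i})`. -/
def ellbin (p q : ℝ) (k l : ℕ) : ℂ :=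
  ∏ i ∈ Finset.range l,
    theta p (qp q (2 * ((k : ℂ) - (l : ℂ) + (i : ℂ) + 1))) / theta p (qp q (2 * ((i : ℂ) + 1)))

/-- Entry `a(λ,z)` of the Andrews–Baxter–Forrester `R`-matrix. -/
def Ra (p q : ℝ) (lam z : ℂ) : ℂ :=
  theta p z * theta p (qp q (2 * (lam + 2))) /
    (theta p (qp q 2 * z) * theta p (qp q (2 * (lam + 1))))

/-- Entry `b(λ,z)` of the Andrews–Baxter–Forrester `R`-matrix. -/
def Rb (p q : ℝ) (lam z : ℂ) : ℂ :=
  theta p (qp q 2) * theta p (qp q (-2 * (lam + 1)) * z) /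
    (theta p (qp q 2 * z) * theta p (qp q (-2 * (lam + 1))))

/-- Entry `c(λ,z)` of the Andrews–Baxter–Forrester `R`-matrix. -/
def Rc (p q : ℝ) (lam z : ℂ) : ℂ :=
  theta p (qp q 2) * theta p (qp q (2 * (lam + 1)) * z) /
    (theta p (qp q 2 * z) * theta p (qp q (2 * (lam + 1))))

/-- Entry `d(λ,z)` of the Andrews–Baxter–Forrester `R`-matrix. -/
def Rd (p q : ℝ) (lam z : ℂ) : ℂ :=
  theta p z * theta p (qp q (-2 * lam)) /
    (theta p (qp q 2 * z) * theta p (qp q (-2 * (lam + 1))))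

/-- Coefficient `A_k(λ,z)` of the Felder–Varchenko dynamical representation `π^ω`. -/
def Ak (p q : ℝ) (om : ℂ) (k : ℕ) (lam z : ℂ) : ℂ :=
  qp q (2 * (k : ℂ)) * theta p (qp q (-2 * (lam + 1) - 2 * (k : ℂ))) *
      theta p (z * qp q (om - 2 * (k : ℂ) + 1)) /
    (theta p (qp q (-2 * (lam + 1))) * theta p (z * qp q (om + 1)))

/-- Coefficient `B_k(λ,z)` of the Felder–Varchenko dynamical representation `π^ω`. -/
def Bk (p q : ℝ) (om : ℂ) (k : ℕ) (lam z : ℂ) : ℂ :=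
  qp q (k : ℂ) * theta p (qp q 2) *
      theta p (z * qp q (-2 * (lam + 1) + om - 2 * (k : ℂ) - 1)) /
    (theta p (qp q (-2 * (lam + 1))) * theta p (z * qp q (om + 1)))

/-- Coefficient `C_k(λ,z)` of the Felder–Varchenko dynamical representation `π^ω`;
`C_0 = 0`. -/
def Ck (p q : ℝ) (om : ℂ) (k : ℕ) (lam z : ℂ) : ℂ :=
  if k = 0 then 0
  else
    qp q (-((k : ℂ) - 1)) * theta p (qp q (2 * (k : ℂ))) *
        theta p (qp q (2 * (om - (k : ℂ) + 1))) *
        theta p (z * qp q (2 * (lam + 1) - om + 2 * (k : ℂ) - 1)) /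
      (theta p (qp q 2) * theta p (qp q (2 * (lam + 1))) * theta p (z * qp q (om + 1)))

/-- Coefficient `D_k(λ,z)` of the Felder–Varchenko dynamical representation `π^ω`. -/
def Dk (p q : ℝ) (om : ℂ) (k : ℕ) (lam z : ℂ) : ℂ :=
  theta p (qp q (-2 * (lam + 1 - om + (k : ℂ)))) * theta p (z * qp q (-om + 2 * (k : ℂ) + 1)) /
    (theta p (qp q (-2 * (lam + 1))) * theta p (z * qp q (om + 1)))

/-- `F(μ) = q^μ θ(q^{-2(μ+1)})`. -/
def Fdet (p q : ℝ) (mu : ℂ) : ℂ := qp q mu * theta p (qp q (-2 * (mu + 1)))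

/-- The coefficient `C_{kl}(μ)` from the corepresentation matrix elements. -/
def Ckl (p q : ℝ) (k l : ℕ) (mu : ℂ) : ℂ :=
  ellbin p q k l * epoch p q (qp q (2 * (mu - (l : ℂ) + 2))) l /
    epoch p q (qp q (2 * (mu + (k : ℂ) - 2 * (l : ℂ) + 2))) l

/-- The terminating balanced very-well-poised elliptic hypergeometric series
`₁₀ω₉(a₁; a₄,…,a₁₀)`, truncated at `n`. -/
def tenW9 (p q : ℝ) (n : ℕ) (a1 a4 a5 a6 a7 a8 a9 a10 : ℂ) : ℂ :=
  ∑ k ∈ Finset.range (n + 1),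
    theta p (a1 * qp q (4 * (k : ℂ))) / theta p a1 *
      (epoch p q a1 k * epoch p q a4 k * epoch p q a5 k * epoch p q a6 k * epoch p q a7 k *
        epoch p q a8 k * epoch p q a9 k * epoch p q a10 k * qp q (2 * (k : ℂ))) /
      (epoch p q (qp q 2) k * epoch p q (a1 * qp q 2 / a4) k * epoch p q (a1 * qp q 2 / a5) k *
        epoch p q (a1 * qp q 2 / a6) k * epoch p q (a1 * qp q 2 / a7) k *
        epoch p q (a1 * qp q 2 / a8) k * epoch p q (a1 * qp q 2 / a9) k *
        epoch p q (a1 * qp q 2 / a10) k)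

/-- The product of all theta factors appearing in denominators of the terms of
`tenW9 p q n a1 a4 … a10` (including the `θ(a₁)` from the very-well-poised prefactor). -/
def tenW9Den (p q : ℝ) (n : ℕ) (a1 a4 a5 a6 a7 a8 a9 a10 : ℂ) : ℂ :=
  theta p a1 * epoch p q (qp q 2) n * epoch p q (a1 * qp q 2 / a4) n *
    epoch p q (a1 * qp q 2 / a5) n * epoch p q (a1 * qp q 2 / a6) n *
    epoch p q (a1 * qp q 2 / a7) n * epoch p q (a1 * qp q 2 / a8) n *
    epoch p q (a1 * qp q 2 / a9) n * epoch p q (a1 * qp q 2 / a10) n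

/-- Finite `q`-Pochhammer `(p;p)_k`. -/
def jtQ (p : ℂ) (k : ℕ) : ℂ := ∏ i ∈ Finset.range k, (1 - p ^ (i + 1))

/-- `1/(p;p)_k` extended by zero to negative integers. -/
def jtR (p : ℂ) (k : ℤ) : ℂ := if 0 ≤ k then (jtQ p k.toNat)⁻¹ else 0

/-- General term of the triple product series. -/
def jtT (r : ℂ) (z : ℂ) (n : ℤ) : ℂ := (-1) ^ n * r ^ (n ^ 2 - n) * z ^ n

lemma jtR_step (p : ℂ) (hp : ∀ k : ℕ, (1 - p ^ (k + 1)) ≠ 0) (k : ℤ) :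
    jtR p (k - 1) = (1 - p ^ k) * jtR p k := by
  unfold jtR
  rcases lt_trichotomy k 0 with h | h | h
  · rw [if_neg (by omega), if_neg (by omega)]; simp
  · subst h; simp
  · rw [if_pos (by omega), if_pos (by omega)]
    obtain ⟨m, rfl⟩ : ∃ m : ℕ, k = (m : ℤ) + 1 := ⟨(k - 1).toNat, by omega⟩
    have h1 : ((m : ℤ) + 1 - 1).toNat = m := by omega
    have h2 : ((m : ℤ) + 1).toNat = m + 1 := by omega
    rw [h1, h2]
    unfold jtQ
    rw [Finset.prod_range_succ, mul_inv]
    have h3 : p ^ ((m : ℤ) + 1) = p ^ (m + 1) := by exact_mod_cast zpow_natCast p (m + 1)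
    rw [h3]
    have := hp m
    field_simp

lemma jt_rec (r : ℂ) (hr : r ≠ 0) (hp : ∀ k : ℕ, (1 - (r ^ 2) ^ (k + 1)) ≠ 0) (z : ℂ)
    (hz : z ≠ 0) (N : ℕ) (n : ℤ) :
    jtQ (r ^ 2) (2 * (N + 1)) * jtR (r ^ 2) ((N + 1 : ℕ) + n) * jtR (r ^ 2) ((N + 1 : ℕ) - n)
        * jtT r z n =
      (1 + (r ^ 2) ^ (2 * N + 1)) *
        (jtQ (r ^ 2) (2 * N) * jtR (r ^ 2) (N + n) * jtR (r ^ 2) (N - n) * jtT r z n)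
      + (- z * (r ^ 2) ^ N) *
        (jtQ (r ^ 2) (2 * N) * jtR (r ^ 2) (N + (n - 1)) * jtR (r ^ 2) (N - (n - 1))
          * jtT r z (n - 1))
      + (- (r ^ 2) ^ (N + 1) / z) *
        (jtQ (r ^ 2) (2 * N) * jtR (r ^ 2) (N + (n + 1)) * jtR (r ^ 2) (N - (n + 1))
          * jtT r z (n + 1)) := by
  have hQ : jtQ (r ^ 2) (2 * (N + 1)) =
      jtQ (r ^ 2) (2 * N) * (1 - (r ^ 2) ^ (2 * N + 1)) * (1 - (r ^ 2) ^ (2 * N + 2)) := by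
    unfold jtQ
    rw [show 2 * (N + 1) = 2 * N + 1 + 1 by ring, Finset.prod_range_succ, Finset.prod_range_succ]
  have hp0 : r ^ 2 ≠ 0 := pow_ne_zero _ hr
  set p := r ^ 2 with hpdef
  have s1 := jtR_step p hp ((N + 1 : ℕ) + n)
  have s2 := jtR_step p hp ((N + 1 : ℕ) - n)
  have s3 := jtR_step p hp ((N + 1 : ℕ) + n - 1)
  have s4 := jtR_step p hp ((N + 1 : ℕ) - n - 1)
  have e1 : ((N : ℤ) + n) = (N + 1 : ℕ) + n - 1 := by push_cast; ring
  have e2 : ((N : ℤ) - n) = (N + 1 : ℕ) - n - 1 := by push_cast; ring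
  have e3 : ((N : ℤ) + (n - 1)) = (N + 1 : ℕ) + n - 1 - 1 := by push_cast; ring
  have e4 : ((N : ℤ) - (n - 1)) = (N + 1 : ℕ) - n := by push_cast; ring
  have e5 : ((N : ℤ) + (n + 1)) = (N + 1 : ℕ) + n := by push_cast; ring
  have e6 : ((N : ℤ) - (n + 1)) = (N + 1 : ℕ) - n - 1 - 1 := by push_cast; ring
  rw [e1, e2, e3, e4, e5, e6, s3, s4, s1, s2, hQ]
  have pz : ∀ k : ℤ, p ^ k = r ^ (2 * k) := fun k => by
    rw [hpdef, zpow_mul]; norm_cast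
  have t1 : z * jtT r z (n - 1) * p ^ n = - p * jtT r z n := by
    unfold jtT
    rw [show (n - 1) ^ 2 - (n - 1) = (n ^ 2 - n) + 2 - 2 * n by ring, zpow_sub₀ hr,
      zpow_add₀ hr, zpow_sub_one₀ hz, zpow_sub_one₀ (by norm_num), pz, hpdef]
    have := zpow_ne_zero (2 * n) hr
    field_simp
  have t2 : jtT r z (n + 1) = - z * p ^ n * jtT r z n := by
    unfold jtT
    rw [show (n + 1) ^ 2 - (n + 1) = (n ^ 2 - n) + 2 * n by ring,
      zpow_add₀ hr, zpow_add_one₀ hz, zpow_add_one₀ (by norm_num), pz]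
    ring
  have hn := zpow_ne_zero n hp0
  have t1' : jtT r z (n - 1) = - p * jtT r z n / (z * p ^ n) := by
    rw [eq_div_iff (mul_ne_zero hz hn)]; linear_combination t1
  rw [t2, t1']
  have a1 : p ^ (((N + 1 : ℕ) : ℤ) + n) = p * p ^ N * p ^ n := by
    rw [zpow_add₀ hp0, zpow_natCast]; ring
  have a2 : p ^ (((N + 1 : ℕ) : ℤ) - n) = p * p ^ N / p ^ n := by
    rw [zpow_sub₀ hp0, zpow_natCast]; ring
  have a3 : p ^ (((N + 1 : ℕ) : ℤ) + n - 1) = p ^ N * p ^ n := by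
    rw [zpow_sub_one₀ hp0, a1]; field_simp
  have a4 : p ^ (((N + 1 : ℕ) : ℤ) - n - 1) = p ^ N / p ^ n := by
    rw [zpow_sub_one₀ hp0, a2]; field_simp
  rw [a1, a2, a3, a4]
  clear_value p
  generalize p ^ n = X at *
  generalize jtR p _ = A
  generalize jtR p _ = B
  generalize jtQ p _ = C
  generalize jtT r z n = D
  rw [show p ^ (2 * N + 1) = p * (p ^ N) ^ 2 by ring,
    show p ^ (2 * N + 2) = p ^ 2 * (p ^ N) ^ 2 by ring, pow_succ p N]
  generalize p ^ N = Y
  field_simp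
  ring

lemma jt_cast {f g : ℤ → ℂ} {a b : ℂ} (h : HasSum f a) (e : ∀ n, g n = f n) (e' : b = a) :
    HasSum g b := by
  rw [e', show g = f from funext e]; exact h

lemma jt_finite (r : ℂ) (hr : r ≠ 0) (hp : ∀ k : ℕ, (1 - (r ^ 2) ^ (k + 1)) ≠ 0) (z : ℂ)
    (hz : z ≠ 0) (N : ℕ) :
    HasSum (fun n : ℤ => jtQ (r ^ 2) (2 * N) * jtR (r ^ 2) (N + n) * jtR (r ^ 2) (N - n)
        * jtT r z n)
      (∏ j ∈ Finset.range N, ((1 - z * (r ^ 2) ^ j) * (1 - (r ^ 2) ^ (j + 1) / z))) := by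
  induction N with
  | zero =>
    have := hasSum_single (f := fun n : ℤ => jtQ (r ^ 2) (2 * 0) * jtR (r ^ 2) ((0 : ℕ) + n)
      * jtR (r ^ 2) ((0 : ℕ) - n) * jtT r z n) 0 (by
        intro n hn
        rcases lt_or_gt_of_ne hn with h | h
        · have : jtR (r ^ 2) ((0 : ℕ) + n) = 0 := by
            unfold jtR; rw [if_neg (by push_cast; omega)]
          simp only [this]; ring
        · have : jtR (r ^ 2) ((0 : ℕ) - n) = 0 := by
            unfold jtR; rw [if_neg (by push_cast; omega)]
          simp only [this]; ring)
    convert this using 1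
    simp [jtQ, jtR, jtT]
  | succ N ih =>
    have h1 := (Equiv.subRight (1 : ℤ)).hasSum_iff.2 ih
    have h2 := (Equiv.addRight (1 : ℤ)).hasSum_iff.2 ih
    have h := ((ih.mul_left (1 + (r ^ 2) ^ (2 * N + 1))).add
      (h1.mul_left (- z * (r ^ 2) ^ N))).add (h2.mul_left (- (r ^ 2) ^ (N + 1) / z))
    rw [Finset.prod_range_succ]
    refine jt_cast h (fun n => ?_) ?_
    · rw [jt_rec r hr hp z hz N n]
      rfl
    · field_simp
      ring

lemma jt_summable (r : ℝ) (h0 : 0 < r) (h1 : r < 1) (z : ℂ) (hz : z ≠ 0) :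
    Summable (fun n : ℤ => ‖jtT (r : ℂ) z n‖) := by
  have hr : (r : ℂ) ≠ 0 := by exact_mod_cast h0.ne'
  have hpi : (Real.pi : ℂ) ≠ 0 := by exact_mod_cast Real.pi_ne_zero
  have hs := ((summable_jacobiTheta₂_term_iff
    (Complex.log (-z / r) / (2 * Real.pi * Complex.I))
    (Complex.I * (-Real.log r / Real.pi : ℝ))).2 (by
      simp only [Complex.mul_im, Complex.I_re, Complex.I_im, Complex.ofReal_re, Complex.ofReal_im]
      have := Real.log_neg h0 h1
      have : 0 < -Real.log r / Real.pi := div_pos (by linarith) Real.pi_pos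
      linarith)).norm
  refine hs.congr (fun n => ?_)
  congr 1
  unfold jacobiTheta₂_term jtT
  rw [show 2 * (Real.pi : ℂ) * Complex.I * n * (Complex.log (-z / r) / (2 * Real.pi * Complex.I))
    + Real.pi * Complex.I * n ^ 2 * (Complex.I * (-Real.log r / Real.pi : ℝ))
    = (n : ℂ) * Complex.log (-z / r) + ((n ^ 2 : ℤ) : ℂ) * (Real.log r : ℝ) by
      push_cast
      have := Complex.I_ne_zero
      field_simp
      linear_combination (-(n : ℂ) ^ 2 * (Real.log r : ℝ)) * Complex.I_sq]
  rw [Complex.exp_add, Complex.exp_int_mul, Complex.exp_int_mul, Complex.exp_log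
    (div_ne_zero (neg_ne_zero.2 hz) hr), ← Complex.ofReal_exp, Real.exp_log h0, zpow_sub₀ hr,
    div_zpow, neg_eq_neg_one_mul z, mul_zpow]
  ring


lemma jt_theta (p : ℝ) (hp0 : 0 < p) (hp1 : p < 1) :
    ∃ k : ℂ, ∀ z : ℂ, z ≠ 0 → theta p z = k * ∑' n : ℤ, jtT (Real.sqrt p : ℂ) z n := by
  set r := Real.sqrt p with hrdef
  have hr0 : 0 < r := Real.sqrt_pos.2 hp0
  have hr1 : r < 1 := by rw [hrdef, Real.sqrt_lt' one_pos]; simpa using hp1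
  have hrp : (r : ℂ) ^ 2 = p := by
    rw [← Complex.ofReal_pow, hrdef, Real.sq_sqrt hp0.le]
  have hr : (r : ℂ) ≠ 0 := by exact_mod_cast hr0.ne'
  have hpn : ‖(p : ℂ)‖ < 1 := by simpa [abs_of_pos hp0] using hp1
  have hne : ∀ k : ℕ, (1 - (p : ℂ) ^ (k + 1)) ≠ 0 := by
    intro k hk
    have h1 : p ^ (k + 1) < 1 := pow_lt_one₀ hp0.le hp1 (by omega)
    have h2 : (1 : ℂ) - ((p ^ (k + 1) : ℝ) : ℂ) = 0 := by push_cast; exact hk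
    have h3 : (1 : ℝ) - p ^ (k + 1) = 0 := by exact_mod_cast h2
    linarith
  have hgeo : Summable (fun n : ℕ => ‖(p : ℂ)‖ ^ n) :=
    summable_geometric_of_lt_one (norm_nonneg _) hpn
  have hgeo1 : Summable (fun n : ℕ => ‖-(p : ℂ) ^ (n + 1)‖) := by
    simpa using (summable_nat_add_iff 1).mpr hgeo
  obtain ⟨L, hL0, hL⟩ : ∃ L : ℂ, L ≠ 0 ∧
      Filter.Tendsto (fun k => jtQ (p : ℂ) k) Filter.atTop (nhds L) := by
    refine ⟨∏' n : ℕ, (1 + -(p : ℂ) ^ (n + 1)), ?_, ?_⟩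
    · refine tprod_one_add_ne_zero_of_summable (f := fun n : ℕ => -(p : ℂ) ^ (n + 1)) ?_ hgeo1
      intro i; simpa [sub_eq_add_neg] using hne i
    · have := (multipliable_one_add_of_summable hgeo1).hasProd.tendsto_prod_nat
      refine this.congr (fun k => ?_)
      simp only [jtQ, sub_eq_add_neg]
  have hLi := hL.inv₀ hL0
  obtain ⟨C1, hC1⟩ := (Metric.isBounded_range_of_tendsto _ hL).exists_norm_le
  obtain ⟨C2, hC2⟩ := (Metric.isBounded_range_of_tendsto _ hLi).exists_norm_le
  have hC1' : ∀ k, ‖jtQ (p : ℂ) k‖ ≤ C1 := fun k => hC1 _ ⟨k, rfl⟩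
  have hC2' : ∀ k, ‖(jtQ (p : ℂ) k)⁻¹‖ ≤ C2 := fun k => hC2 _ ⟨k, rfl⟩
  have hC10 : 0 ≤ C1 := (norm_nonneg _).trans (hC1' 0)
  have hC20 : 0 ≤ C2 := (norm_nonneg _).trans (hC2' 0)
  have hR : ∀ k, ‖jtR (p : ℂ) k‖ ≤ C2 := by
    intro k; unfold jtR; split_ifs
    · exact hC2' _
    · simpa using hC20
  have hRlim : ∀ u : ℕ → ℤ, Filter.Tendsto u Filter.atTop Filter.atTop →
      Filter.Tendsto (fun N => jtR (p : ℂ) (u N)) Filter.atTop (nhds L⁻¹) := by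
    intro u hu
    have h1 : Filter.Tendsto (fun N => (u N).toNat) Filter.atTop Filter.atTop := by
      rw [Filter.tendsto_atTop] at hu ⊢
      intro b
      filter_upwards [hu b] with N hN
      omega
    refine (hLi.comp h1).congr' ?_
    filter_upwards [hu.eventually_ge_atTop 0] with N hN
    simp [jtR, hN]
  refine ⟨L⁻¹, fun z hz => ?_⟩
  have hprod : Filter.Tendsto (fun N : ℕ => ∏ j ∈ Finset.range N,
      ((1 - z * (p : ℂ) ^ j) * (1 - (p : ℂ) ^ (j + 1) / z))) Filter.atTop (nhds (theta p z)) := by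
    have m1 : Multipliable (fun j : ℕ => 1 + -(z * (p : ℂ) ^ j)) :=
      multipliable_one_add_of_summable (by simpa using hgeo.mul_left ‖z‖)
    have m2 : Multipliable (fun j : ℕ => 1 + -((p : ℂ) ^ (j + 1) / z)) :=
      multipliable_one_add_of_summable (by simpa using hgeo1.div_const ‖z‖)
    have m := m1.mul m2
    simp only [← sub_eq_add_neg] at m
    exact m.hasProd.tendsto_prod_nat
  have hlim : Filter.Tendsto (fun N : ℕ => ∑' n : ℤ, jtQ (p : ℂ) (2 * N) * jtR (p : ℂ) (N + n)
      * jtR (p : ℂ) (N - n) * jtT r z n) Filter.atTop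
      (nhds (∑' n : ℤ, L⁻¹ * jtT r z n)) := by
    refine tendsto_tsum_of_dominated_convergence
      (bound := fun n => C1 * C2 * C2 * ‖jtT r z n‖) ((jt_summable r hr0 hr1 z hz).mul_left _)
      (fun n => ?_) (Filter.Eventually.of_forall fun N n => ?_)
    · have c : Filter.Tendsto (fun N : ℕ => (N : ℤ)) Filter.atTop Filter.atTop :=
        tendsto_natCast_atTop_atTop
      have l1 := hRlim (fun N => (N : ℤ) + n) (Filter.tendsto_atTop_add_const_right _ n c)
      have l2 := hRlim (fun N => (N : ℤ) - n) (Filter.tendsto_atTop_add_const_right _ (-n) c)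
      have l3 : Filter.Tendsto (fun N : ℕ => jtQ (p : ℂ) (2 * N)) Filter.atTop (nhds L) :=
        hL.comp (Filter.tendsto_id.const_mul_atTop' (by norm_num : 0 < 2))
      have := (((l3.mul l1).mul l2).mul_const (jtT r z n))
      rwa [mul_inv_cancel₀ hL0, one_mul] at this
    · rw [norm_mul, norm_mul, norm_mul]
      gcongr
      · exact hC1' _
      · exact hR _
      · exact hR _
  rw [tsum_mul_left] at hlim
  refine tendsto_nhds_unique hprod (hlim.congr fun N => ?_)
  have := (jt_finite r hr (by rw [hrp]; exact hne) z hz N).tsum_eq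
  rwa [hrp] at this

lemma jt_split (r : ℝ) (h0 : 0 < r) (h1 : r < 1) (x y : ℂ) (hx : x ≠ 0) (hy : y ≠ 0) :
    (∑' n : ℤ, jtT r (x * y) n) * (∑' n : ℤ, jtT r (x / y) n) =
      (∑' n : ℤ, jtT (r ^ 2 : ℝ) (-x ^ 2) n) * (∑' n : ℤ, jtT (r ^ 2 : ℝ) (-(r * y) ^ 2) n)
      - x / y * ((∑' n : ℤ, jtT (r ^ 2 : ℝ) (-(r * x) ^ 2) n) *
        (∑' n : ℤ, jtT (r ^ 2 : ℝ) (-y ^ 2) n)) := by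
  have hr : (r : ℂ) ≠ 0 := by exact_mod_cast h0.ne'
  have q0 : 0 < r ^ 2 := by positivity
  have q1 : r ^ 2 < 1 := pow_lt_one₀ h0.le h1 (by norm_num)
  have hA : ∀ u : ℂ, u ≠ 0 → Summable (fun n : ℤ => ‖jtT (r ^ 2 : ℝ) (-u ^ 2) n‖) := fun u hu =>
    jt_summable _ q0 q1 _ (neg_ne_zero.2 (pow_ne_zero _ hu))
  have sqz : ∀ u : ℂ, ∀ k : ℤ, (u ^ 2) ^ k = u ^ (2 * k) := fun u k => by
    rw [zpow_mul]; norm_cast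
  have hT : ∀ u : ℂ, ∀ n : ℤ, jtT (r ^ 2 : ℝ) (-u ^ 2) n =
      (r : ℂ) ^ (2 * (n ^ 2 - n)) * u ^ (2 * n) := by
    intro u n
    unfold jtT
    rw [neg_eq_neg_one_mul (u ^ 2), mul_zpow, Complex.ofReal_pow, sqz, sqz]
    have : ((-1 : ℂ) ^ n) * (-1) ^ n = 1 := by rw [← mul_zpow]; simp
    linear_combination ((r : ℂ) ^ (2 * (n ^ 2 - n)) * u ^ (2 * n)) * this
  have prodHas : ∀ f g : ℤ → ℂ, Summable (fun n => ‖f n‖) → Summable (fun n => ‖g n‖) →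
      HasSum (fun q : ℤ × ℤ => f q.1 * g q.2) ((∑' n, f n) * ∑' n, g n) := by
    intro f g hf hg
    rw [tsum_mul_tsum_of_summable_norm hf hg]
    exact (summable_mul_of_summable_norm hf hg).hasSum
  have H := prodHas _ _ (jt_summable r h0 h1 (x * y) (mul_ne_zero hx hy))
    (jt_summable r h0 h1 (x / y) (div_ne_zero hx hy))
  have HE := prodHas _ _ (hA x hx) (hA (r * y) (mul_ne_zero hr hy))
  have HO := (((Equiv.refl ℤ).prodCongr (Equiv.addRight (1 : ℤ))).hasSum_iff.2
    (prodHas _ _ (hA (r * x) (mul_ne_zero hr hx)) (hA y hy))).mul_left (-(x / y))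
  set F : ℤ × ℤ → ℂ := fun q => jtT r (x * y) q.1 * jtT r (x / y) q.2 with hF
  let ge : ℤ × ℤ → ℤ × ℤ := fun q => (q.1 + q.2, q.1 - q.2)
  let go : ℤ × ℤ → ℤ × ℤ := fun q => (q.1 + q.2 + 1, q.1 - q.2)
  have ige : Function.Injective ge := by
    rintro ⟨a, b⟩ ⟨c, d⟩ h
    simp only [ge, Prod.mk.injEq] at h ⊢
    omega
  have igo : Function.Injective go := by
    rintro ⟨a, b⟩ ⟨c, d⟩ h
    simp only [go, Prod.mk.injEq] at h ⊢
    omega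
  have m1 : ∀ k : ℤ, (-1 : ℂ) ^ (2 * k) = 1 := fun k => by rw [← sqz]; simp
  have E : ∀ q : ℤ × ℤ, F (ge q) =
      jtT (r ^ 2 : ℝ) (-x ^ 2) q.1 * jtT (r ^ 2 : ℝ) (-(r * y) ^ 2) q.2 := by
    rintro ⟨a, b⟩
    simp only [hF, ge, hT]
    unfold jtT
    rw [mul_zpow, div_zpow, mul_zpow]
    calc _ = ((-1 : ℂ) ^ (a + b) * (-1) ^ (a - b)) *
          ((r : ℂ) ^ ((a + b) ^ 2 - (a + b)) * (r : ℂ) ^ ((a - b) ^ 2 - (a - b))) *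
          (x ^ (a + b) * x ^ (a - b)) * (y ^ (a + b) / y ^ (a - b)) := by ring
      _ = ((r : ℂ) ^ (2 * (a ^ 2 - a)) * (r : ℂ) ^ (2 * (b ^ 2 - b)) * (r : ℂ) ^ (2 * b)) *
          x ^ (2 * a) * y ^ (2 * b) := by
        rw [← zpow_add₀ (by norm_num : (-1 : ℂ) ≠ 0), ← zpow_add₀ hr, ← zpow_add₀ hx,
          ← zpow_sub₀ hy, ← zpow_add₀ hr, ← zpow_add₀ hr,
          show a + b + (a - b) = 2 * a by ring, m1, one_mul,
          show a + b - (a - b) = 2 * b by ring]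
        congr 3
        ring
      _ = _ := by ring
  have O : ∀ q : ℤ × ℤ, F (go q) = -(x / y) *
      (jtT (r ^ 2 : ℝ) (-(r * x) ^ 2) q.1 * jtT (r ^ 2 : ℝ) (-y ^ 2) (q.2 + 1)) := by
    rintro ⟨a, b⟩
    simp only [hF, go, hT]
    unfold jtT
    rw [mul_zpow, div_zpow, mul_zpow]
    calc _ = ((-1 : ℂ) ^ (a + b + 1) * (-1) ^ (a - b)) *
          ((r : ℂ) ^ ((a + b + 1) ^ 2 - (a + b + 1)) * (r : ℂ) ^ ((a - b) ^ 2 - (a - b))) *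
          (x ^ (a + b + 1) * x ^ (a - b)) * (y ^ (a + b + 1) / y ^ (a - b)) := by ring
      _ = -1 * ((r : ℂ) ^ (2 * (a ^ 2 - a)) * (r : ℂ) ^ (2 * a) *
            (r : ℂ) ^ (2 * ((b + 1) ^ 2 - (b + 1)))) *
          (x ^ (2 * a) * x) * (y ^ (2 * (b + 1)) / y) := by
        rw [← zpow_add₀ (by norm_num : (-1 : ℂ) ≠ 0), ← zpow_add₀ hr, ← zpow_add₀ hx,
          ← zpow_sub₀ hy, ← zpow_add₀ hr, ← zpow_add₀ hr, ← zpow_add_one₀ hx,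
          div_eq_mul_inv, ← zpow_sub_one₀ hy,
          show a + b + 1 + (a - b) = 2 * a + 1 by ring, zpow_add_one₀ (by norm_num), m1, one_mul,
          show a + b + 1 - (a - b) = 2 * (b + 1) - 1 by ring]
        congr 4
        ring
      _ = _ := by ring
  have compl : IsCompl (Set.range ge) (Set.range go) := by
    constructor
    · rw [Set.disjoint_left]
      rintro _ ⟨⟨a, b⟩, rfl⟩ ⟨⟨c, d⟩, h⟩
      simp only [ge, go, Prod.mk.injEq] at h
      omega
    · rw [codisjoint_iff_le_sup]
      rintro ⟨m, n⟩ -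
      rcases Int.even_or_odd' (m + n) with ⟨c, h | h⟩
      · left; exact ⟨(c, m - c), by simp only [ge, Prod.mk.injEq]; omega⟩
      · right; exact ⟨(c, m - c - 1), by simp only [go, Prod.mk.injEq]; omega⟩
  have HE' := HE
  have HO' := HO
  rw [← show F ∘ ge = _ from funext E] at HE'
  replace HO' := (show F ∘ go = _ from funext O) ▸ HO
  have tot := HasSum.add_isCompl (f := F) compl (ige.hasSum_range_iff.2 HE') (igo.hasSum_range_iff.2 HO')
  rw [H.unique tot]
  ring

/-- The addition formula (Weierstrass three-term identity) for the normalized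
Jacobi theta function. -/
theorem theta_addition (p : ℝ) (hp0 : 0 < p) (hp1 : p < 1)
    (x y z w : ℂ) (hx : x ≠ 0) (hy : y ≠ 0) (hz : z ≠ 0) (hw : w ≠ 0) :
    theta p (x * y) * theta p (x / y) * theta p (z * w) * theta p (z / w) =
      theta p (x * w) * theta p (x / w) * theta p (z * y) * theta p (z / y) +
        z / y * (theta p (x * z) * theta p (x / z) * theta p (y * w) * theta p (y / w)) := by
  obtain ⟨k, hk⟩ := jt_theta p hp0 hp1
  have hr0 : 0 < Real.sqrt p := Real.sqrt_pos.2 hp0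
  have hr1 : Real.sqrt p < 1 := by rw [Real.sqrt_lt' one_pos]; simpa using hp1
  obtain ⟨A, B, h⟩ : ∃ A B : ℂ → ℂ, ∀ u v : ℂ, u ≠ 0 → v ≠ 0 →
      theta p (u * v) * theta p (u / v) = k ^ 2 * (A u * B v - u / v * (B u * A v)) := by
    refine ⟨fun u => ∑' n : ℤ, jtT (Real.sqrt p ^ 2 : ℝ) (-u ^ 2) n,
      fun u => ∑' n : ℤ, jtT (Real.sqrt p ^ 2 : ℝ) (-(Real.sqrt p * u) ^ 2) n, ?_⟩
    intro u v hu hv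
    rw [hk _ (mul_ne_zero hu hv), hk _ (div_ne_zero hu hv), ← jt_split _ hr0 hr1 u v hu hv]
    ring
  have e1 := h x y hx hy
  have e2 := h z w hz hw
  have e3 := h x w hx hw
  have e4 := h z y hz hy
  have e5 := h x z hx hz
  have e6 := h y w hy hw
  rw [mul_assoc, e1, e2, mul_assoc (theta p (x * w) * _), e3, e4, mul_assoc (theta p (x * z) * _),
    e5, e6]
  field_simp
  ring

end
end

section
/- The determinant of the middle 2×2 block of the Andrews–Baxter–Forrester R-matrix equals a(λ,z)d(λ,z) − b(λ,z)c(λ,z) = q²·θ(z q⁻²)/θ(z q²), for all λ ∈ ℂ and nonzero z ∈ ℂ such that θ(q²z), θ(q^{2(λ+1)}) and θ(q^{−2(λ+1)}) are nonzero. -/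
noncomputable section

open Finset

open Filter Topology

/-- Term of the theta series, in logarithmic variables. -/
def Tm (L : ℝ) (x : ℂ) (n : ℤ) : ℂ :=
  Complex.exp (Real.pi * Complex.I * n + L * n * (n - 1) / 2 + n * x)

/-- Pure Gaussian term. -/
def Gm (L : ℝ) (x : ℂ) (n : ℤ) : ℂ :=
  Complex.exp (L * n ^ 2 + n * x)

lemma Gm_summable {L : ℝ} (hL : L < 0) (x : ℂ) : Summable (Gm L x) := by
  have hpi : (Real.pi : ℂ) ≠ 0 := by exact_mod_cast Real.pi_ne_zero
  have h := (summable_jacobiTheta₂_term_iff (x / (2 * Real.pi * Complex.I))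
    (((-L / Real.pi : ℝ) : ℂ) * Complex.I)).2 (by
      simp only [Complex.mul_im, Complex.ofReal_re, Complex.ofReal_im, Complex.I_im, Complex.I_re]
      have := Real.pi_pos
      have : 0 < -L / Real.pi := div_pos (by linarith) this
      simpa using this)
  refine h.congr fun n => ?_
  unfold jacobiTheta₂_term Gm
  congr 1
  push_cast
  field_simp
  rw [Complex.I_sq]
  ring

lemma Tm_eq_Gm (L : ℝ) (x : ℂ) (n : ℤ) :
    Tm L x n = Gm (L / 2) (Real.pi * Complex.I - L / 2 + x) n := by
  unfold Tm Gm
  congr 1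
  push_cast
  ring

lemma Tm_summable {L : ℝ} (hL : L < 0) (x : ℂ) : Summable (Tm L x) :=
  (Gm_summable (L := L / 2) (by linarith) _).congr fun n => (Tm_eq_Gm L x n).symm

/-- Finite Euler product. -/
def PP (p : ℝ) (k : ℕ) : ℝ := ∏ i ∈ Finset.range k, (1 - p ^ (i + 1))

/-- Reciprocal of the finite Euler product, extended by zero. -/
def RR (p : ℝ) (k : ℤ) : ℝ := if 0 ≤ k then (PP p k.toNat)⁻¹ else 0

lemma PP_pos {p : ℝ} (hp0 : 0 < p) (hp1 : p < 1) (k : ℕ) : 0 < PP p k :=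
  Finset.prod_pos fun i _ => by
    have := pow_lt_one₀ hp0.le hp1 (Nat.succ_ne_zero i)
    simp only [Nat.succ_eq_add_one] at this
    linarith

lemma PP_succ (p : ℝ) (k : ℕ) : PP p (k + 1) = PP p k * (1 - p ^ (k + 1)) := by
  simp [PP, Finset.prod_range_succ]

lemma RR_rec {p : ℝ} (hp0 : 0 < p) (hp1 : p < 1) (k : ℤ) :
    RR p (k - 1) = (1 - p ^ k) * RR p k := by
  rcases lt_trichotomy k 0 with h | h | h
  · simp [RR, show ¬ (0 ≤ k) by omega, show ¬ (1 ≤ k) by omega]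
  · subst h; simp [RR]
  · obtain ⟨m, rfl⟩ : ∃ m : ℕ, k = (m : ℤ) + 1 := ⟨(k - 1).toNat, by omega⟩
    have h1 := (PP_pos hp0 hp1 m).ne'
    have h2 := (PP_pos hp0 hp1 (m + 1)).ne'
    have e1 : RR p ((m : ℤ) + 1 - 1) = (PP p m)⁻¹ := by simp [RR]
    have e2 : RR p ((m : ℤ) + 1) = (PP p (m + 1))⁻¹ := by
      rw [RR, if_pos (by omega)]; rfl
    rw [e1, e2]
    have : p ^ ((m : ℤ) + 1) = p ^ (m + 1) := by
      rw [← zpow_natCast]; simp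
    rw [this]
    rw [PP_succ] at h2 ⊢
    have h3 : 1 - p ^ (m + 1) ≠ 0 := right_ne_zero_of_mul h2
    field_simp

lemma PP_limit {p : ℝ} (hp0 : 0 < p) (hp1 : p < 1) :
    ∃ P : ℝ, 0 < P ∧ Tendsto (PP p) atTop (𝓝 P) ∧ ∀ k, P ≤ PP p k := by
  have hs : Summable (fun i : ℕ => ‖-p ^ (i + 1)‖) := by
    simp only [norm_neg, norm_pow, Real.norm_eq_abs, abs_of_pos hp0]
    exact (summable_nat_add_iff 1).2 (summable_geometric_of_lt_one hp0.le hp1)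
  have hm := multipliable_one_add_of_summable hs
  have ht := hm.tendsto_prod_tprod_nat
  have he : (fun n => ∏ i ∈ Finset.range n, (1 + -p ^ (i + 1))) = PP p := by
    funext n; simp [PP, sub_eq_add_neg]
  rw [he] at ht
  have hne := tprod_one_add_ne_zero_of_summable (f := fun i : ℕ => -p ^ (i + 1)) (fun i => by
    have := pow_lt_one₀ hp0.le hp1 (Nat.succ_ne_zero i)
    simp only [Nat.succ_eq_add_one] at this
    intro h; linarith) hs
  have hge := ge_of_tendsto' ht (fun k => (PP_pos hp0 hp1 k).le)
  refine ⟨_, lt_of_le_of_ne hge hne.symm, ht, fun k => ?_⟩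
  have hanti : Antitone (PP p) := antitone_nat_of_succ_le fun n => by
    rw [PP_succ]
    have h1 := PP_pos hp0 hp1 n
    have h2 : 0 < p ^ (n + 1) := by positivity
    nlinarith
  exact hanti.le_of_tendsto ht k

/-- Finite theta product. -/
def FF (p : ℝ) (z : ℂ) (N : ℕ) : ℂ :=
  ∏ j ∈ Finset.range N, ((1 - z * (p : ℂ) ^ j) * (1 - (p : ℂ) ^ (j + 1) / z))

lemma Tm_pred (L : ℝ) (x : ℂ) (n : ℤ) :
    Tm L x (n - 1) * Complex.exp x * Complex.exp (L * (n - 1)) = - Tm L x n := by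
  have : - Tm L x n = Complex.exp (-(Real.pi * Complex.I)) * Tm L x n := by
    rw [Complex.exp_neg, Complex.exp_pi_mul_I]; norm_num
  rw [this]
  unfold Tm
  rw [← Complex.exp_add, ← Complex.exp_add, ← Complex.exp_add]
  congr 1
  push_cast
  ring

lemma FF_hasSum {L : ℝ} (hL : L < 0) (x : ℂ) (N : ℕ) :
    HasSum (fun n : ℤ => ((PP (Real.exp L) (2 * N) * RR (Real.exp L) (N + n) *
      RR (Real.exp L) (N - n) : ℝ) : ℂ) * Tm L x n) (FF (Real.exp L) (Complex.exp x) N) := by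
  have hp0 := Real.exp_pos L
  have hp1 : Real.exp L < 1 := (by simpa using hL)
  induction N with
  | zero =>
    have := hasSum_single (f := (fun n : ℤ => ((PP (Real.exp L) (2 * 0) * RR (Real.exp L) ((0 : ℕ) + n) *
      RR (Real.exp L) ((0 : ℕ) - n) : ℝ) : ℂ) * Tm L x n)) 0 (fun n hn => by
        rcases lt_or_gt_of_ne hn with h | h
        · have : RR (Real.exp L) ((0 : ℕ) + n) = 0 := by rw [RR, if_neg (by simpa using h)]
          simp only [this]; simp
        · have : RR (Real.exp L) ((0 : ℕ) - n) = 0 := by rw [RR, if_neg (by simpa using h)]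
          simp only [this]; simp)
    simpa [FF, PP, RR, Tm] using this
  | succ N ih =>
    set p := Real.exp L with hp
    have i1 := ih.mul_left (1 + (p : ℂ) ^ (2 * N + 1))
    have i2 := ((Equiv.subRight (1 : ℤ)).hasSum_iff.2 ih).mul_left (Complex.exp x * (p : ℂ) ^ N)
    have i3 := ((Equiv.addRight (1 : ℤ)).hasSum_iff.2 ih).mul_left ((p : ℂ) ^ (N + 1) / Complex.exp x)
    have i := (i1.sub i2).sub i3
    have hx := Complex.exp_ne_zero x
    have hF : FF p (Complex.exp x) (N + 1) = (1 + (p : ℂ) ^ (2 * N + 1)) * FF p (Complex.exp x) N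
        - Complex.exp x * (p : ℂ) ^ N * FF p (Complex.exp x) N
        - (p : ℂ) ^ (N + 1) / Complex.exp x * FF p (Complex.exp x) N := by
      rw [FF, Finset.prod_range_succ, ← FF]
      field_simp
      ring
    rw [hF]
    refine i.congr_fun fun n => ?_
    simp only [Function.comp_apply, Equiv.subRight_apply, Equiv.coe_addRight]
    have hpc : ((p : ℝ) : ℂ) ≠ 0 := by exact_mod_cast hp0.ne'
    have hexpz : ∀ k : ℤ, Complex.exp (L * k) = ((p ^ k : ℝ) : ℂ) := fun k => by
      rw [hp]; push_cast; rw [← Complex.exp_int_mul, mul_comm]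
    have t1 : Complex.exp x * Tm L x (n - 1) = - Tm L x n * ((p ^ (1 - n) : ℝ) : ℂ) := by
      have := Tm_pred L x n
      have e := hexpz (n - 1)
      push_cast at e
      rw [e] at this
      have h2 : p ^ (1 - n) = (p ^ (n - 1))⁻¹ := by rw [← zpow_neg]; congr 1; ring
      rw [← this, h2]
      push_cast
      have : (p : ℂ) ^ (n - 1) ≠ 0 := zpow_ne_zero _ hpc
      field_simp
    have t2 : Tm L x (n + 1) / Complex.exp x = - Tm L x n * ((p ^ n : ℝ) : ℂ) := by
      have := Tm_pred L x (n + 1)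
      rw [show ((n + 1 : ℤ) : ℂ) - 1 = n by push_cast; ring, hexpz, add_sub_cancel_right] at this
      rw [div_eq_iff hx]
      rw [← neg_eq_iff_eq_neg] at this
      rw [← this]; ring
    set ρ := RR p (N + n + 1)
    set σ := RR p (N - n + 1)
    set A := p ^ ((N : ℤ) + n + 1) with hA
    set B := p ^ ((N : ℤ) - n + 1) with hB
    have r1 : RR p (N + n) = (1 - A) * ρ := by
      have := RR_rec hp0 hp1 (N + n + 1); rwa [add_sub_cancel_right] at this
    have r2 : RR p (N - n) = (1 - B) * σ := by
      have := RR_rec hp0 hp1 (N - n + 1); rwa [add_sub_cancel_right] at this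
    have hA' : p ^ ((N : ℤ) + n) = A / p := by
      rw [hA, zpow_add_one₀ hp0.ne']; field_simp
    have hB' : p ^ ((N : ℤ) - n) = B / p := by
      rw [hB, zpow_add_one₀ hp0.ne']; field_simp
    have r3 : RR p (N + (n - 1)) = (1 - A / p) * ((1 - A) * ρ) := by
      have := RR_rec hp0 hp1 (N + n)
      rw [hA', r1] at this
      rw [← this]; congr 1; ring
    have r4 : RR p (N - (n + 1)) = (1 - B / p) * ((1 - B) * σ) := by
      have := RR_rec hp0 hp1 (N - n)
      rw [hB', r2] at this
      rw [← this]; congr 1; ring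
    have r5 : RR p (N - (n - 1)) = σ := by
      show _ = RR p _; congr 1; ring
    have r6 : RR p (N + (n + 1)) = ρ := by
      show _ = RR p _; congr 1; ring
    have r7 : RR p ((N + 1 : ℕ) - n) = σ := by
      show _ = RR p _; congr 1; push_cast; ring
    have r8 : RR p ((N + 1 : ℕ) + n) = ρ := by
      show _ = RR p _; congr 1; push_cast; ring
    have hAB : p ^ (2 * N + 2) = A * B := by
      rw [hA, hB, ← zpow_add₀ hp0.ne', ← zpow_natCast]; congr 1; push_cast; ring
    have hAB1 : p ^ (2 * N + 1) = A * B / p := by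
      rw [← hAB, pow_succ p (2 * N + 1)]; field_simp
    have hP : PP p (2 * (N + 1)) = PP p (2 * N) * (1 - A * B / p) * (1 - A * B) := by
      rw [show 2 * (N + 1) = 2 * N + 1 + 1 by ring, PP_succ, PP_succ, hAB1,
        show 2 * N + 1 + 1 = 2 * N + 2 by ring, hAB]
    have m1 : p ^ N * p ^ (1 - n) = B := by
      rw [hB, ← zpow_natCast, ← zpow_add₀ hp0.ne']; congr 1; ring
    have m2 : p ^ (N + 1) * p ^ n = A := by
      rw [hA, ← zpow_natCast, ← zpow_add₀ hp0.ne']; congr 1; push_cast; ring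
    rw [r1, r2, r3, r4, r5, r6, r7, r8, hP]
    have hA1 : (p : ℂ) ^ (2 * N + 1) = ((A * B / p : ℝ) : ℂ) := by rw [← hAB1]; push_cast; rfl
    have key : (1 - A * B / p) * (1 - A * B) =
        (1 + A * B / p) * (1 - A) * (1 - B) + B * ((1 - A / p) * (1 - A))
          + A * ((1 - B / p) * (1 - B)) := by
      have := hp0.ne'
      field_simp
      ring
    have key2 : PP p (2 * N) * (1 - A * B / p) * (1 - A * B) * ρ * σ =
       (1 + A * B / p) * (PP p (2 * N) * ((1 - A) * ρ) * ((1 - B) * σ))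
       + p ^ N * p ^ (1 - n) * (PP p (2 * N) * ((1 - A / p) * ((1 - A) * ρ)) * σ)
       + p ^ (N + 1) * p ^ n * (PP p (2 * N) * ρ * ((1 - B / p) * ((1 - B) * σ))) := by
      rw [m1, m2]
      linear_combination PP p (2 * N) * ρ * σ * key
    rw [key2, hA1]
    generalize PP p (2 * N) * ((1 - A / p) * ((1 - A) * ρ)) * σ = X1
    generalize PP p (2 * N) * ρ * ((1 - B / p) * ((1 - B) * σ)) = X2
    have t1' : Complex.exp x * (p : ℂ) ^ N * ((X1 : ℂ) * Tm L x (n - 1)) =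
      (p : ℂ) ^ N * X1 * (- Tm L x n * ((p ^ (1 - n) : ℝ) : ℂ)) := by rw [← t1]; ring
    have t2' : (p : ℂ) ^ (N + 1) / Complex.exp x * ((X2 : ℂ) * Tm L x (n + 1)) =
      (p : ℂ) ^ (N + 1) * X2 * (- Tm L x n * ((p ^ n : ℝ) : ℂ)) := by rw [← t2]; ring
    rw [t1', t2']
    push_cast
    ring

lemma theta_multipliable {p : ℝ} (hp0 : 0 < p) (hp1 : p < 1) (z : ℂ) :
    Multipliable fun j : ℕ => ((1 - z * (p : ℂ) ^ j) * (1 - (p : ℂ) ^ (j + 1) / z)) := by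
  have hg := summable_geometric_of_lt_one hp0.le hp1
  have a1 : Multipliable fun j : ℕ => (1 + -(z * (p : ℂ) ^ j)) := by
    apply multipliable_one_add_of_summable
    simp only [norm_neg, norm_mul, norm_pow, Complex.norm_real, Real.norm_eq_abs, abs_of_pos hp0]
    exact hg.mul_left _
  have a2 : Multipliable fun j : ℕ => (1 + -((p : ℂ) ^ (j + 1) / z)) := by
    apply multipliable_one_add_of_summable
    simp only [norm_neg, norm_div, norm_pow, Complex.norm_real, Real.norm_eq_abs, abs_of_pos hp0]
    exact ((summable_nat_add_iff 1).2 hg).div_const _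
  simpa only [sub_eq_add_neg] using a1.mul a2

/-- Jacobi triple product, up to a constant. -/
lemma triple {L : ℝ} (hL : L < 0) : ∃ κ : ℂ, ∀ x : ℂ,
    theta (Real.exp L) (Complex.exp x) = κ * ∑' n : ℤ, Tm L x n := by
  have hp0 := Real.exp_pos L
  have hp1 : Real.exp L < 1 := (by simpa using hL)
  set p := Real.exp L with hp
  obtain ⟨P, hP0, hPt, hPle⟩ := PP_limit hp0 hp1
  refine ⟨((P * P⁻¹ * P⁻¹ : ℝ) : ℂ), fun x => ?_⟩
  have l1 : Tendsto (FF p (Complex.exp x)) atTop (𝓝 (theta p (Complex.exp x))) :=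
    (theta_multipliable hp0 hp1 (Complex.exp x)).tendsto_prod_tprod_nat
  have hRle : ∀ k, RR p k ≤ P⁻¹ := fun k => by
    unfold RR
    split_ifs
    · exact inv_anti₀ hP0 (hPle _)
    · positivity
  have hR0 : ∀ k, 0 ≤ RR p k := fun k => by
    unfold RR
    split_ifs
    · exact (inv_pos.2 (PP_pos hp0 hp1 _)).le
    · exact le_rfl
  have hPle1 : ∀ k, PP p k ≤ 1 := fun k => Finset.prod_le_one (fun i _ => by
      have := pow_lt_one₀ hp0.le hp1 (Nat.succ_ne_zero i)
      simp only [Nat.succ_eq_add_one] at this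
      linarith) (fun i _ => by
      have : 0 < p ^ (i + 1) := by positivity
      linarith)
  have hRt : Tendsto (RR p) atTop (𝓝 P⁻¹) := by
    have h1 : Tendsto (fun k : ℤ => (PP p k.toNat)⁻¹) atTop (𝓝 P⁻¹) := by
      refine (hPt.comp ?_).inv₀ hP0.ne'
      exact tendsto_atTop_atTop.2 fun b => ⟨b, fun a ha => by omega⟩
    refine h1.congr' ?_
    filter_upwards [eventually_ge_atTop (0 : ℤ)] with k hk
    rw [RR, if_pos hk]
  have l2 : Tendsto (fun N : ℕ => ∑' n : ℤ, ((PP p (2 * N) * RR p (N + n) *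
      RR p (N - n) : ℝ) : ℂ) * Tm L x n) atTop
      (𝓝 (∑' n : ℤ, ((P * P⁻¹ * P⁻¹ : ℝ) : ℂ) * Tm L x n)) := by
    refine tendsto_tsum_of_dominated_convergence
      (bound := fun n => (1 * P⁻¹ * P⁻¹) * ‖Tm L x n‖)
      ((Tm_summable hL x).norm.mul_left _) (fun n => ?_) (Eventually.of_forall fun N n => ?_)
    · refine Tendsto.mul_const _ ((Complex.continuous_ofReal.tendsto _).comp ?_)
      refine (Tendsto.mul ?_ ?_).mul ?_
      · exact hPt.comp (tendsto_atTop_atTop.2 fun b => ⟨b, fun a ha => by omega⟩)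
      · exact hRt.comp (tendsto_atTop_atTop.2 fun b => ⟨(b - n).toNat, fun a ha => by omega⟩)
      · exact hRt.comp (tendsto_atTop_atTop.2 fun b => ⟨(b + n).toNat, fun a ha => by omega⟩)
    · rw [norm_mul, Complex.norm_real, Real.norm_eq_abs]
      have h0 := PP_pos hp0 hp1 (2 * N)
      have h1 := hR0 (N + n)
      have h2 := hR0 (N - n)
      rw [abs_of_nonneg (by positivity)]
      have i1 := hPle1 (2 * N)
      have i2 := hRle (N + n)
      have i3 := hRle (N - n)
      gcongr
  have e : (fun N : ℕ => ∑' n : ℤ, ((PP p (2 * N) * RR p (N + n) *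
      RR p (N - n) : ℝ) : ℂ) * Tm L x n) = FF p (Complex.exp x) :=
    funext fun N => (FF_hasSum hL x N).tsum_eq
  rw [e] at l2
  rw [tendsto_nhds_unique l1 l2, tsum_mul_left]

/-- Reindexing of pairs of integers by parity of the sum. -/
def parEquiv : (ℤ × ℤ) ⊕ (ℤ × ℤ) ≃ ℤ × ℤ where
  toFun s := Sum.elim (fun u => (u.2 + u.1, u.2 - u.1)) (fun u => (u.2 + u.1 + 1, u.2 - u.1)) s
  invFun v := if (v.1 + v.2) % 2 = 0 then Sum.inl ((v.1 - v.2) / 2, (v.1 + v.2) / 2)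
    else Sum.inr ((v.1 - v.2 - 1) / 2, (v.1 + v.2 - 1) / 2)
  left_inv s := by
    rcases s with ⟨l, k⟩ | ⟨l, k⟩
    · have h : (k + l + (k - l)) % 2 = 0 := by omega
      refine (if_pos h).trans ?_
      show Sum.inl ((k + l - (k - l)) / 2, (k + l + (k - l)) / 2) = _
      congr 2 <;> omega
    · have h : ¬ (k + l + 1 + (k - l)) % 2 = 0 := by omega
      refine (if_neg h).trans ?_
      show Sum.inr ((k + l + 1 - (k - l) - 1) / 2, (k + l + 1 + (k - l) - 1) / 2) = _
      congr 2 <;> omega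
  right_inv v := by
    rcases v with ⟨m, n⟩
    dsimp only
    split_ifs with h
    · simp only [Sum.elim_inl, Prod.mk.injEq]; omega
    · simp only [Sum.elim_inr, Prod.mk.injEq]; omega

lemma exp_two_pi_int (n : ℤ) : Complex.exp (2 * Real.pi * Complex.I * n) = 1 := by
  have := Complex.exp_int_mul_two_pi_mul_I n
  rw [← this]; ring_nf

/-- The rank two decomposition. -/
lemma rank_two {L : ℝ} (hL : L < 0) : ∃ a b c d : ℂ → ℂ, ∀ x y : ℂ,
    theta (Real.exp L) (Complex.exp (y + x)) * theta (Real.exp L) (Complex.exp (y - x)) =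
      a x * b y + c x * d y := by
  obtain ⟨κ, hκ⟩ := triple hL
  refine ⟨fun x => κ ^ 2 * ∑' n, Gm L (2 * x) n, fun y => ∑' n, Gm L (2 * y - L) n,
    fun x => κ ^ 2 * (Complex.exp x * ∑' n, Gm L (2 * x + L) n),
    fun y => -(Complex.exp y * ∑' n, Gm L (2 * y) n), fun x y => ?_⟩
  rw [hκ, hκ]
  have s1 := summable_mul_of_summable_norm (Tm_summable hL (y + x)).norm
    (Tm_summable hL (y - x)).norm
  have h1 := (Tm_summable hL (y + x)).hasSum.mul (Tm_summable hL (y - x)).hasSum s1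
  have g1 := (Gm_summable hL (2 * x)).hasSum.mul (Gm_summable hL (2 * y - L)).hasSum
    (summable_mul_of_summable_norm (Gm_summable hL (2 * x)).norm
      (Gm_summable hL (2 * y - L)).norm)
  have g2 := ((Gm_summable hL (2 * x + L)).hasSum.mul (Gm_summable hL (2 * y)).hasSum
    (summable_mul_of_summable_norm (Gm_summable hL (2 * x + L)).norm
      (Gm_summable hL (2 * y)).norm)).mul_left (-(Complex.exp x * Complex.exp y))
  have h2 := parEquiv.hasSum_iff.2 h1
  have e1 : ∀ u : ℤ × ℤ, Tm L (y + x) (u.2 + u.1) * Tm L (y - x) (u.2 - u.1) =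
      Gm L (2 * x) u.1 * Gm L (2 * y - L) u.2 := fun u => by
    rw [← mul_one (Gm L (2 * x) u.1 * Gm L (2 * y - L) u.2), ← exp_two_pi_int u.2]
    unfold Tm Gm
    simp only [← Complex.exp_add]
    congr 1
    push_cast
    ring
  have e2 : ∀ u : ℤ × ℤ, Tm L (y + x) (u.2 + u.1 + 1) * Tm L (y - x) (u.2 - u.1) =
      -(Complex.exp x * Complex.exp y) * (Gm L (2 * x + L) u.1 * Gm L (2 * y) u.2) := fun u => by
    have : -(Complex.exp x * Complex.exp y) * (Gm L (2 * x + L) u.1 * Gm L (2 * y) u.2) =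
        Complex.exp (2 * Real.pi * Complex.I * u.2) * (Complex.exp (Real.pi * Complex.I) *
        (Complex.exp x * Complex.exp y) * (Gm L (2 * x + L) u.1 * Gm L (2 * y) u.2)) := by
      rw [Complex.exp_pi_mul_I, exp_two_pi_int]; ring
    rw [this]
    unfold Tm Gm
    simp only [← Complex.exp_add]
    congr 1
    push_cast
    ring
  have h3 := HasSum.sum (f := (fun v : ℤ × ℤ => Tm L (y + x) v.1 * Tm L (y - x) v.2) ∘ parEquiv)
    (g1.congr_fun fun u => e1 u) (g2.congr_fun fun u => e2 u)
  have := h2.unique h3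
  linear_combination κ ^ 2 * this

lemma theta_inv {L : ℝ} (hL : L < 0) (x : ℂ) :
    theta (Real.exp L) (Complex.exp (-x)) * Complex.exp x =
      - theta (Real.exp L) (Complex.exp x) := by
  obtain ⟨κ, hκ⟩ := triple hL
  rw [hκ, hκ]
  have h := (Equiv.subLeft (1 : ℤ)).tsum_eq (Tm L (-x))
  rw [← h, mul_assoc, ← tsum_mul_right, ← mul_neg, ← tsum_neg]
  congr 1
  refine tsum_congr fun n => ?_
  have : - Tm L x n = Complex.exp (2 * Real.pi * Complex.I * (-n : ℤ)) *
      (Complex.exp (Real.pi * Complex.I) * Tm L x n) := by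
    rw [Complex.exp_pi_mul_I, exp_two_pi_int]; ring
  rw [this, Equiv.subLeft_apply]
  unfold Tm
  simp only [← Complex.exp_add]
  congr 1
  push_cast
  ring

lemma pfaffian (a b c d : Fin 4 → ℂ)
    (h : ∀ i j, a i * b j + c i * d j = -(a j * b i + c j * d i)) :
    (a 0 * b 1 + c 0 * d 1) * (a 2 * b 3 + c 2 * d 3)
    - (a 0 * b 2 + c 0 * d 2) * (a 1 * b 3 + c 1 * d 3)
    + (a 0 * b 3 + c 0 * d 3) * (a 1 * b 2 + c 1 * d 2) = 0 := by
  set M : Matrix (Fin 4) (Fin 4) ℂ := Matrix.of fun i j => a i * b j + c i * d j with hM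
  have hdet : M.det = 0 := by
    simp [hM, Matrix.det_succ_row_zero, Fin.sum_univ_succ, Fin.succAbove]
    ring
  have hanti : ∀ i j, M i j = - M j i := fun i j => h i j
  have hd : ∀ i, M i i = 0 := fun i => by
    have := hanti i i
    linear_combination this / 2
  have hpf : M.det = (M 0 1 * M 2 3 - M 0 2 * M 1 3 + M 0 3 * M 1 2) ^ 2 := by
    have : M = !![0, M 0 1, M 0 2, M 0 3; -M 0 1, 0, M 1 2, M 1 3;
        -M 0 2, -M 1 2, 0, M 2 3; -M 0 3, -M 1 3, -M 2 3, 0] := by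
      ext i j
      fin_cases i <;> fin_cases j <;>
        first
        | exact hd _
        | rfl
        | exact hanti _ _
    rw [this]
    simp [Matrix.det_succ_row_zero, Fin.sum_univ_succ, Fin.succAbove]
    ring
  rw [hdet] at hpf
  exact pow_eq_zero_iff (two_ne_zero) |>.1 hpf.symm

lemma weierstrass {L : ℝ} (hL : L < 0) (x y u v : ℂ) (S : ℂ → ℂ → ℂ)
    (hS : ∀ x y, S x y = Complex.exp x * (theta (Real.exp L) (Complex.exp (y + x)) *
      theta (Real.exp L) (Complex.exp (y - x)))) :
    S x y * S u v - S x u * S y v + S x v * S y u = 0 ∧ (∀ x y, S x y = - S y x) := by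
  obtain ⟨a, b, c, d, h⟩ := rank_two hL
  have hanti : ∀ x y, S x y = - S y x := fun x y => by
    rw [hS, hS, add_comm x y]
    have := theta_inv hL (y - x)
    rw [neg_sub] at this
    have e : Complex.exp y = Complex.exp (y - x) * Complex.exp x := by
      rw [← Complex.exp_add]; congr 1; ring
    rw [e]
    linear_combination (Complex.exp x * theta (Real.exp L) (Complex.exp (y + x))) * this
  refine ⟨?_, hanti⟩
  have hS' : ∀ x y, S x y = (Complex.exp x * a x) * b y + (Complex.exp x * c x) * d y := by
    intro x y; rw [hS, h]; ring
  have := pfaffian (fun i => Complex.exp (![x, y, u, v] i) * a (![x, y, u, v] i))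
    (fun i => b (![x, y, u, v] i))
    (fun i => Complex.exp (![x, y, u, v] i) * c (![x, y, u, v] i))
    (fun i => d (![x, y, u, v] i)) (fun i j => by
      simp only [← hS']; exact hanti _ _)
  simp only [← hS'] at this
  exact this

/-- The determinant of the middle 2×2 block of the ABF `R`-matrix:
`a(λ,z)d(λ,z) − b(λ,z)c(λ,z) = q² θ(z q⁻²)/θ(z q²)`. -/
theorem Rmatrix_det (p q : ℝ) (hp0 : 0 < p) (hp1 : p < 1) (hq0 : 0 < q) (hq1 : q < 1)
    (lam z : ℂ) (hz : z ≠ 0)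
    (h1 : theta p (qp q 2 * z) ≠ 0)
    (h2 : theta p (qp q (2 * (lam + 1))) ≠ 0)
    (h3 : theta p (qp q (-2 * (lam + 1))) ≠ 0) :
    Ra p q lam z * Rd p q lam z - Rb p q lam z * Rc p q lam z =
      qp q 2 * theta p (z * qp q (-2)) / theta p (z * qp q 2) := by
  obtain ⟨L, hL, rfl⟩ : ∃ L : ℝ, L < 0 ∧ p = Real.exp L :=
    ⟨Real.log p, Real.log_neg hp0 hp1, (Real.exp_log hp0).symm⟩
  obtain ⟨Z, rfl⟩ : ∃ Z, z = Complex.exp Z := ⟨Complex.log z, (Complex.exp_log hz).symm⟩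
  set t : ℂ := 2 * (Real.log q : ℂ) with ht
  set w : ℂ := 2 * (lam + 1) * (Real.log q : ℂ) with hw
  obtain ⟨hPf, hanti⟩ := weierstrass hL 0 Z w t _ (fun _ _ => rfl)
  have hinv := theta_inv hL w
  have e1 : qp q 2 = Complex.exp t := rfl
  have e2 : qp q (2 * (lam + 1)) = Complex.exp w := rfl
  have e3 : qp q (-2 * (lam + 1)) = Complex.exp (-w) := by
    unfold qp; congr 1; rw [hw]; ring
  have e4 : qp q (2 * (lam + 2)) = Complex.exp (t + w) := by
    unfold qp; congr 1; rw [hw, ht]; ring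
  have e5 : qp q (-2 * lam) = Complex.exp (t - w) := by
    unfold qp; congr 1; rw [hw, ht]; ring
  have e6 : qp q (-2) = Complex.exp (-t) := by
    unfold qp; congr 1; rw [ht]; ring
  unfold Ra Rb Rc Rd
  rw [e1] at h1
  rw [e2] at h2
  rw [e3] at h3
  rw [e1, e2, e3, e4, e5, e6]
  have f1 : Complex.exp t * Complex.exp Z = Complex.exp (Z + t) := by
    rw [← Complex.exp_add, add_comm]
  have f2 : Complex.exp Z * Complex.exp t = Complex.exp (Z + t) := by
    rw [← Complex.exp_add]
  have f3 : Complex.exp (-w) * Complex.exp Z = Complex.exp (Z - w) := by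
    rw [← Complex.exp_add]; congr 1; ring
  have f4 : Complex.exp w * Complex.exp Z = Complex.exp (Z + w) := by
    rw [← Complex.exp_add]; congr 1; ring
  have f5 : Complex.exp Z * Complex.exp (-t) = Complex.exp (Z - t) := by
    rw [← Complex.exp_add]; congr 1
  rw [f1] at h1
  rw [f1, f2, f3, f4, f5]
  have hZt := hanti Z t
  have hZw := hanti Z w
  rw [hZt, hZw] at hPf
  simp only [add_zero, sub_zero, Complex.exp_zero, one_mul] at hPf
  have hw0 := Complex.exp_ne_zero w
  have key : theta (Real.exp L) (Complex.exp Z) * theta (Real.exp L) (Complex.exp (t + w)) *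
      (theta (Real.exp L) (Complex.exp Z) * theta (Real.exp L) (Complex.exp (t - w))) -
      theta (Real.exp L) (Complex.exp t) * theta (Real.exp L) (Complex.exp (Z - w)) *
      (theta (Real.exp L) (Complex.exp t) * theta (Real.exp L) (Complex.exp (Z + w))) =
      Complex.exp t * theta (Real.exp L) (Complex.exp (Z - t)) *
      theta (Real.exp L) (Complex.exp (Z + t)) * theta (Real.exp L) (Complex.exp w) *
      theta (Real.exp L) (Complex.exp (-w)) := by
    apply mul_left_cancel₀ hw0
    linear_combination hPf - (Complex.exp t * theta (Real.exp L) (Complex.exp (Z - t)) *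
      theta (Real.exp L) (Complex.exp (Z + t)) * theta (Real.exp L) (Complex.exp w)) * hinv
  field_simp
  linear_combination key

end
end

section
/- The Andrews–Baxter–Forrester R-matrix R(λ,z) satisfies the quantum dynamical Yang–Baxter equation with spectral parameter: for all λ ∈ ℂ and all nonzero complex z₁, z₂, z₃ for which all entries appearing are defined (no theta denominator vanishes), the following identity of operators on V⊗V⊗V holds, where V = ℂe₁ ⊕ ℂe₋₁ with e_{±1} of weight ±1: R^{12}(λ − h^{(3)}, z₁/z₂) R^{13}(λ, z₁/z₃) R^{23}(λ − h^{(1)}, z₂/z₃) = R^{23}(λ, z₂/z₃) R^{13}(λ − h^{(2)}, z₁/z₃) R^{12}(λ, z₁/z₂). Here R^{ij} denotes R acting in the i-th and j-th tensor factors, and R^{ij}(λ − h^{(k)}, z) acts on a basis vector whose k-th tensor factor is e_ε (ε = ±1) as R^{ij}(λ − ε, z). -/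
noncomputable section

open Finset

/-- The ABF `R`-matrix as a matrix on `V ⊗ V`, `V = ℂe₁ ⊕ ℂe₋₁`.  The basis of
`V` is indexed by `Fin 2`, where `0` stands for `e₁` (weight `+1`) and `1`
stands for `e₋₁` (weight `−1`).  The entry at row `(x,y)` and column `(a,b)`
is the coefficient `R^{ab}_{xy}` in `R(e_a ⊗ e_b) = Σ R^{ab}_{xy} e_x ⊗ e_y`. -/
def Rmat (p q : ℝ) (lam z : ℂ) : Matrix (Fin 2 × Fin 2) (Fin 2 × Fin 2) ℂ :=
  fun x y =>
    if x = ((0 : Fin 2), (0 : Fin 2)) ∧ y = ((0 : Fin 2), (0 : Fin 2)) then 1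
    else if x = ((1 : Fin 2), (1 : Fin 2)) ∧ y = ((1 : Fin 2), (1 : Fin 2)) then 1
    else if x = ((0 : Fin 2), (1 : Fin 2)) ∧ y = ((0 : Fin 2), (1 : Fin 2)) then Ra p q lam z
    else if x = ((0 : Fin 2), (1 : Fin 2)) ∧ y = ((1 : Fin 2), (0 : Fin 2)) then Rb p q lam z
    else if x = ((1 : Fin 2), (0 : Fin 2)) ∧ y = ((0 : Fin 2), (1 : Fin 2)) then Rc p q lam z
    else if x = ((1 : Fin 2), (0 : Fin 2)) ∧ y = ((1 : Fin 2), (0 : Fin 2)) then Rd p q lam z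
    else 0

/-- The weight of the basis vector `e₁` resp. `e₋₁` of `V`. -/
def wt (i : Fin 2) : ℂ := if i = 0 then 1 else -1

/-- `R` acting in the first and second tensor factors of `V ⊗ V ⊗ V`, with the
dynamical parameter allowed to depend (through `f`) on the index of the basis
vector in the third (spectator) factor; this realizes `R^{12}(λ - h^{(3)}, z)`
when `f = fun ε => λ - wt ε` and `R^{12}(λ, z)` when `f` is constant. -/
def R12 (p q : ℝ) (f : Fin 2 → ℂ) (z : ℂ) :
    Matrix (Fin 2 × Fin 2 × Fin 2) (Fin 2 × Fin 2 × Fin 2) ℂ :=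
  fun x y =>
    Rmat p q (f y.2.2) z (x.1, x.2.1) (y.1, y.2.1) * if x.2.2 = y.2.2 then 1 else 0

/-- `R` acting in the first and third tensor factors, the second being the
spectator. -/
def R13 (p q : ℝ) (f : Fin 2 → ℂ) (z : ℂ) :
    Matrix (Fin 2 × Fin 2 × Fin 2) (Fin 2 × Fin 2 × Fin 2) ℂ :=
  fun x y =>
    Rmat p q (f y.2.1) z (x.1, x.2.2) (y.1, y.2.2) * if x.2.1 = y.2.1 then 1 else 0

/-- `R` acting in the second and third tensor factors, the first being the
spectator. -/
def R23 (p q : ℝ) (f : Fin 2 → ℂ) (z : ℂ) :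
    Matrix (Fin 2 × Fin 2 × Fin 2) (Fin 2 × Fin 2 × Fin 2) ℂ :=
  fun x y =>
    Rmat p q (f y.1) z (x.2.1, x.2.2) (y.2.1, y.2.2) * if x.1 = y.1 then 1 else 0

/-! ### The Jacobi triple product -/

/-- Summand of the theta series, `(-1)^n p^{n(n-1)/2} z^n` with `p = exp τ`, `z = exp x`. -/
def thT (τ x : ℂ) (n : ℤ) : ℂ :=
  Complex.exp (Real.pi * Complex.I * n + τ * (n * (n - 1) / 2) + n * x)

lemma thT_succ (τ x : ℂ) (n : ℤ) :
    thT τ x (n + 1) = -(Complex.exp x * Complex.exp τ ^ n) * thT τ x n := by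
  unfold thT
  rw [← Complex.exp_int_mul, ← Complex.exp_add, ← neg_one_mul, ← Complex.exp_pi_mul_I,
    ← Complex.exp_add, ← Complex.exp_add]
  congr 1
  push_cast
  ring

lemma summable_quad (s x y : ℂ) (hs : s.re < 0) :
    Summable (fun n : ℤ => Complex.exp (s * n ^ 2 + x * n + y)) := by
  have hpi : (Real.pi : ℂ) ≠ 0 := by exact_mod_cast Real.pi_ne_zero
  have him : 0 < (s / (Real.pi * Complex.I)).im := by
    have : s / (Real.pi * Complex.I) = ((1 / Real.pi : ℝ) : ℂ) * (-(s * Complex.I)) := by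
      push_cast
      field_simp
      rw [Complex.I_sq]
      ring
    rw [this, Complex.im_ofReal_mul]
    have : 0 < 1 / Real.pi := by positivity
    simp only [Complex.neg_im, Complex.mul_I_im]
    nlinarith
  have h := (summable_jacobiTheta₂_term_iff (x / (2 * Real.pi * Complex.I))
    (s / (Real.pi * Complex.I))).2 him
  refine (h.mul_left (Complex.exp y)).congr fun n => ?_
  unfold jacobiTheta₂_term
  rw [← Complex.exp_add]
  congr 1
  field_simp
  ring

lemma summable_thT (τ x : ℂ) (hτ : τ.re < 0) : Summable (thT τ x) := by
  refine (summable_quad (τ / 2) (Real.pi * Complex.I - τ / 2 + x) 0 ?_).congr fun n => ?_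
  · simp; linarith
  · unfold thT
    congr 1
    ring

/-- Finite Pochhammer `(p;p)_n`. -/
def phiN (p : ℂ) (n : ℕ) : ℂ := ∏ i ∈ Finset.range n, (1 - p ^ (i + 1))

/-- `1 / (p;p)_k`, vanishing for negative `k`. -/
def rInv (p : ℂ) (k : ℤ) : ℂ := if k < 0 then 0 else (phiN p k.toNat)⁻¹

lemma one_sub_pow_ne (p : ℂ) (hp : ‖p‖ < 1) (i : ℕ) : 1 - p ^ (i + 1) ≠ 0 := by
  intro h
  have h1 : p ^ (i + 1) = 1 := (sub_eq_zero.1 h).symm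
  have h2 : ‖p‖ ^ (i + 1) = 1 := by rw [← norm_pow, h1, norm_one]
  have h3 : ‖p‖ ^ (i + 1) < 1 := pow_lt_one₀ (norm_nonneg _) hp (by omega)
  linarith

lemma phiN_ne (p : ℂ) (hp : ‖p‖ < 1) (n : ℕ) : phiN p n ≠ 0 :=
  Finset.prod_ne_zero_iff.2 fun i _ => one_sub_pow_ne p hp i

lemma rInv_pred (p : ℂ) (hp : ‖p‖ < 1) (k : ℤ) :
    rInv p (k - 1) = (1 - p ^ k) * rInv p k := by
  unfold rInv
  rcases lt_trichotomy k 0 with h | h | h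
  · rw [if_pos (by omega), if_pos h, mul_zero]
  · subst h; simp
  · rw [if_neg (by omega), if_neg (by omega)]
    obtain ⟨m, rfl⟩ : ∃ m : ℕ, k = m + 1 := ⟨(k - 1).toNat, by omega⟩
    have e1 : ((m : ℤ) + 1 - 1).toNat = m := by omega
    have e2 : ((m : ℤ) + 1).toNat = m + 1 := by omega
    have e3 : p ^ ((m : ℤ) + 1) = p ^ (m + 1) := by exact_mod_cast zpow_natCast p (m + 1)
    rw [e1, e2, e3, phiN, phiN, Finset.prod_range_succ]
    have := one_sub_pow_ne p hp m
    rw [mul_inv_rev, ← mul_assoc, mul_inv_cancel₀ this, one_mul]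

lemma finite_triple (τ x : ℂ) (hτ : τ.re < 0) (N : ℕ) :
    HasSum (fun n : ℤ => thT τ x n * (rInv (Complex.exp τ) (N + n) * rInv (Complex.exp τ) (N - n)))
      ((∏ j ∈ Finset.range N, ((1 - Complex.exp x * Complex.exp τ ^ j) *
        (1 - Complex.exp τ ^ (j + 1) / Complex.exp x))) / phiN (Complex.exp τ) (2 * N)) := by
  have hp : ‖Complex.exp τ‖ < 1 := by
    rw [Complex.norm_exp]; simpa using hτ
  have hp0 : Complex.exp τ ≠ 0 := Complex.exp_ne_zero _
  have hz0 : Complex.exp x ≠ 0 := Complex.exp_ne_zero _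
  induction N with
  | zero =>
    have h := hasSum_single (f := fun n : ℤ => thT τ x n *
      (rInv (Complex.exp τ) ((0 : ℕ) + n) * rInv (Complex.exp τ) ((0 : ℕ) - n))) 0 ?_
    · convert h using 1
      simp [thT, rInv, phiN]
    · intro n hn
      rcases lt_or_gt_of_ne hn with h | h
      · simp [rInv, h]
      · simp [rInv, h]
  | succ N ih =>
    have hm := (Equiv.subRight (1 : ℤ)).hasSum_iff.2 ih
    have hpl := (Equiv.addRight (1 : ℤ)).hasSum_iff.2 ih
    set p := Complex.exp τ with hpdef
    set z := Complex.exp x with hzdef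
    have hA := one_sub_pow_ne p hp (2 * N)
    have hB := one_sub_pow_ne p hp (2 * N + 1)
    have key := (((ih.mul_left (1 + p ^ (2 * N + 1))).sub (hm.mul_left (z * p ^ N))).sub
      (hpl.mul_left (p ^ (N + 1) / z))).mul_left ((1 - p ^ (2 * N + 1)) * (1 - p ^ (2 * N + 2)))⁻¹
    convert key using 1
    · rfl
    · funext n
      simp only [Function.comp_apply, Equiv.subRight_apply, Equiv.coe_addRight]
      rw [eq_inv_mul_iff_mul_eq₀ (mul_ne_zero hA hB)]
      have t1 := thT_succ τ x n
      have t2 := thT_succ τ x (n - 1)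
      rw [sub_add_cancel] at t2
      rw [← hpdef, ← hzdef] at t1 t2
      have r1 := rInv_pred p hp (N + 1 + n)
      have r2 := rInv_pred p hp (N + n)
      have r3 := rInv_pred p hp (N + 1 - n)
      have r4 := rInv_pred p hp (N - n)
      have e1 : (N : ℤ) + 1 + n - 1 = N + n := by ring
      have e3 : (N : ℤ) + 1 - n - 1 = N - n := by ring
      rw [e1] at r1
      rw [e3] at r3
      have f1 : (N : ℤ) + (n - 1) = N + n - 1 := by ring
      have f2 : (N : ℤ) - (n - 1) = N + 1 - n := by ring
      have f3 : (N : ℤ) + (n + 1) = N + 1 + n := by ring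
      have f4 : (N : ℤ) - (n + 1) = N - n - 1 := by ring
      push_cast
      rw [f1, f2, f3, f4, r2, r4, r1, r3, t1]
      have t2' : thT τ x (n - 1) = -(thT τ x n) / (z * p ^ (n - 1)) := by
        rw [t2]
        have := zpow_ne_zero (n - 1) hp0
        field_simp
      rw [t2']
      have hP := zpow_ne_zero n hp0
      simp only [zpow_add₀ hp0, zpow_sub₀ hp0, zpow_one, zpow_natCast]
      field_simp
      ring
    · rw [Finset.prod_range_succ, show 2 * (N + 1) = 2 * N + 1 + 1 by ring, phiN, phiN,
        Finset.prod_range_succ, Finset.prod_range_succ]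
      have := phiN_ne p hp (2 * N)
      unfold phiN at this
      field_simp
      ring

lemma theta_series (p : ℝ) (hp0 : 0 < p) (hp1 : p < 1) :
    ∃ K : ℂ, K ≠ 0 ∧ ∀ x : ℂ, theta p (Complex.exp x) = K * ∑' n, thT (Real.log p : ℂ) x n := by
  have hτ : ((Real.log p : ℝ) : ℂ).re < 0 := by
    simpa using Real.log_neg hp0 hp1
  have hexp : Complex.exp (Real.log p : ℂ) = p := by
    rw [← Complex.ofReal_exp, Real.exp_log hp0]
  have hpn : ‖(p : ℂ)‖ < 1 := by simpa [abs_of_pos hp0] using hp1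
  have hs : Summable (fun j : ℕ => ‖(p : ℂ)‖ ^ j) :=
    summable_geometric_of_lt_one (norm_nonneg _) hpn
  have hs1 : Summable (fun j : ℕ => ‖-(p : ℂ) ^ (j + 1)‖) := by
    simpa [pow_succ] using hs.mul_right ‖(p : ℂ)‖
  have hm1 : Multipliable (fun j : ℕ => 1 + -(p : ℂ) ^ (j + 1)) :=
    multipliable_one_add_of_summable hs1
  have hφ := tprod_one_add_ne_zero_of_summable
    (fun j => by simpa [← sub_eq_add_neg] using one_sub_pow_ne (p : ℂ) hpn j) hs1
  have hlim := hm1.tendsto_prod_tprod_nat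
  simp only [← sub_eq_add_neg] at hφ hlim
  set φ := ∏' j : ℕ, (1 - (p : ℂ) ^ (j + 1)) with hφdef
  have hlim' : Filter.Tendsto (phiN p) Filter.atTop (nhds φ) := hlim
  have hinv : Filter.Tendsto (fun n => (phiN p n)⁻¹) Filter.atTop (nhds φ⁻¹) := hlim'.inv₀ hφ
  obtain ⟨C, hC⟩ := (Metric.isBounded_range_of_tendsto _ hinv).exists_norm_le
  have hC' : ∀ n, ‖(phiN p n)⁻¹‖ ≤ C := fun n => hC _ ⟨n, rfl⟩
  have hC0 : 0 ≤ C := (norm_nonneg _).trans (hC' 0)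
  have hr : ∀ k, ‖rInv p k‖ ≤ C := by
    intro k
    unfold rInv
    split_ifs
    · simpa using hC0
    · exact hC' _
  refine ⟨φ⁻¹, inv_ne_zero hφ, fun x => ?_⟩
  have hz0 := Complex.exp_ne_zero x
  have hfin := finite_triple (Real.log p : ℂ) x hτ
  rw [hexp] at hfin
  set z := Complex.exp x with hz
  have hmA : Multipliable (fun j : ℕ => 1 + -(z * (p : ℂ) ^ j)) :=
    multipliable_one_add_of_summable (by simpa using hs.mul_left ‖z‖)
  have hmB : Multipliable (fun j : ℕ => 1 + -((p : ℂ) ^ (j + 1) / z)) :=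
    multipliable_one_add_of_summable (by
      have := hs1.mul_right ‖z‖⁻¹
      simpa [div_eq_mul_inv] using this)
  have hθ := (hmA.mul hmB).tendsto_prod_tprod_nat
  simp only [← sub_eq_add_neg] at hθ
  have h2N : Filter.Tendsto (fun N : ℕ => 2 * N) Filter.atTop Filter.atTop :=
    Filter.tendsto_id.const_mul_atTop' (by norm_num)
  have hL := hθ.div (hlim'.comp h2N) hφ
  have hrl : ∀ n : ℤ, Filter.Tendsto (fun N : ℕ => rInv p (N + n)) Filter.atTop (nhds φ⁻¹) := by
    intro n
    have h1 : Filter.Tendsto (fun N : ℕ => ((N : ℤ) + n).toNat) Filter.atTop Filter.atTop := by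
      refine Filter.tendsto_atTop.2 fun b => ?_
      filter_upwards [Filter.eventually_ge_atTop (b + n.natAbs)] with N hN
      omega
    refine (hinv.comp h1).congr' ?_
    filter_upwards [Filter.eventually_ge_atTop n.natAbs] with N hN
    simp only [Function.comp_apply, rInv]
    rw [if_neg (by omega)]
  have hS := summable_thT (Real.log p : ℂ) x hτ
  have hR := tendsto_tsum_of_dominated_convergence (𝓕 := Filter.atTop)
    (f := fun (N : ℕ) (n : ℤ) => thT (Real.log p : ℂ) x n * (rInv p (N + n) * rInv p (N - n)))
    (g := fun n => thT (Real.log p : ℂ) x n * (φ⁻¹ * φ⁻¹))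
    (bound := fun n => ‖thT (Real.log p : ℂ) x n‖ * (C * C))
    (hS.norm.mul_right _)
    (fun n => ((hrl n).mul (by simpa [sub_eq_add_neg] using hrl (-n))).const_mul _)
    (Filter.Eventually.of_forall fun N n => by
      rw [norm_mul, norm_mul]
      gcongr
      · exact hr _
      · exact hr _)
  have hEq := tendsto_nhds_unique hR (by
    refine hL.congr fun N => ?_
    exact (hfin N).tsum_eq.symm)
  rw [tsum_mul_right] at hEq
  unfold theta
  field_simp at hEq ⊢
  linear_combination -hEq

/-! ### Weierstrass' addition formula -/

/-- The odd additive theta function `f(x) = e^{-x/2} θ(e^x)`. -/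
def fth (p : ℝ) (x : ℂ) : ℂ := Complex.exp (-x / 2) * theta p (Complex.exp x)

/-- Symmetrised summand. -/
def fT (τ x : ℂ) (n : ℤ) : ℂ :=
  Complex.exp (Real.pi * Complex.I * n + τ * (n * (n - 1) / 2) + (n - 1 / 2) * x)

lemma fT_eq (τ x : ℂ) (n : ℤ) : fT τ x n = Complex.exp (-x / 2) * thT τ x n := by
  unfold fT thT
  rw [← Complex.exp_add]
  congr 1
  ring

lemma fth_series (p : ℝ) (hp0 : 0 < p) (hp1 : p < 1) :
    ∃ K : ℂ, ∀ x : ℂ, fth p x = K * ∑' n, fT (Real.log p : ℂ) x n := by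
  obtain ⟨K, _, hK⟩ := theta_series p hp0 hp1
  refine ⟨K, fun x => ?_⟩
  simp only [fT_eq, tsum_mul_left, fth, hK]
  ring

lemma summable_fT (τ x : ℂ) (hτ : τ.re < 0) : Summable (fT τ x) := by
  refine ((summable_thT τ x hτ).mul_left (Complex.exp (-x / 2))).congr fun n => ?_
  rw [fT_eq]

lemma neg_exp (a : ℂ) : -Complex.exp a = Complex.exp (a + Real.pi * Complex.I) := by
  rw [Complex.exp_add, Complex.exp_pi_mul_I]
  ring

lemma fth_neg (p : ℝ) (hp0 : 0 < p) (hp1 : p < 1) (x : ℂ) : fth p (-x) = -fth p x := by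
  obtain ⟨K, hK⟩ := fth_series p hp0 hp1
  rw [hK, hK, ← (Equiv.subLeft (1 : ℤ)).tsum_eq, ← mul_neg, ← tsum_neg]
  congr 1
  refine tsum_congr fun n => ?_
  simp only [Equiv.subLeft_apply, fT]
  rw [neg_exp]
  refine Complex.exp_eq_exp_iff_exists_int.2 ⟨-n, ?_⟩
  push_cast
  ring

/-- Splitting of pairs of integers by the parity of their sum. -/
def parMap : (ℤ × ℤ) ⊕ (ℤ × ℤ) → ℤ × ℤ :=
  Sum.elim (fun a => (a.1 + a.2, a.1 - a.2)) (fun a => (a.1 + a.2, a.1 - a.2 + 1))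

lemma parMap_bij : Function.Bijective parMap := by
  constructor
  · rintro (⟨a, b⟩ | ⟨a, b⟩) (⟨c, d⟩ | ⟨c, d⟩) h <;>
      simp only [parMap, Sum.elim_inl, Sum.elim_inr, Prod.mk.injEq] at h
    · congr 2 <;> omega
    · omega
    · omega
    · congr 2 <;> omega
  · rintro ⟨m, n⟩
    by_cases h : (m + n) % 2 = 0
    · exact ⟨Sum.inl ((m + n) / 2, (m - n) / 2), by simp [parMap]; omega⟩
    · exact ⟨Sum.inr ((m + n - 1) / 2, (m - n + 1) / 2), by simp [parMap]; omega⟩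

/-- Even theta series. -/
def evT (τ x : ℂ) (n : ℤ) : ℂ := Complex.exp (τ * n ^ 2 + 2 * x * n + 0)

/-- Odd theta series. -/
def odT (τ x : ℂ) (n : ℤ) : ℂ := Complex.exp (τ * n ^ 2 + (2 * x - τ) * n + (τ / 4 - x))

lemma fT_even (τ x y : ℂ) (j k : ℤ) :
    fT τ (x + y) (j + k) * fT τ (x - y) (j - k) =
      Complex.exp (-τ / 4) * (odT τ x j * evT τ y k) := by
  unfold fT odT evT
  simp only [← Complex.exp_add]
  refine Complex.exp_eq_exp_iff_exists_int.2 ⟨j, ?_⟩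
  push_cast
  ring

lemma fT_odd (τ x y : ℂ) (j k : ℤ) :
    fT τ (x + y) (j + k) * fT τ (x - y) (j - k + 1) =
      -Complex.exp (-τ / 4) * (evT τ x j * odT τ y k) := by
  unfold fT odT evT
  rw [neg_exp]
  simp only [← Complex.exp_add]
  refine Complex.exp_eq_exp_iff_exists_int.2 ⟨j, ?_⟩
  push_cast
  ring

lemma fth_rank_two (p : ℝ) (hp0 : 0 < p) (hp1 : p < 1) :
    ∃ (A : ℂ) (e o : ℂ → ℂ), ∀ x y : ℂ,
      fth p (x + y) * fth p (x - y) = A * (o x * e y - e x * o y) := by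
  obtain ⟨K, hK⟩ := fth_series p hp0 hp1
  have hτ : ((Real.log p : ℝ) : ℂ).re < 0 := by
    simpa using Real.log_neg hp0 hp1
  set τ : ℂ := (Real.log p : ℂ) with hτd
  refine ⟨K ^ 2 * Complex.exp (-τ / 4), fun x => ∑' n, evT τ x n, fun x => ∑' n, odT τ x n,
    fun x y => ?_⟩
  have se : ∀ x, Summable (evT τ x) := fun x => summable_quad _ _ _ hτ
  have so : ∀ x, Summable (odT τ x) := fun x => summable_quad _ _ _ hτ
  have s1 := summable_fT τ (x + y) hτ
  have s2 := summable_fT τ (x - y) hτ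
  have hsum := summable_mul_of_summable_norm s1.norm s2.norm
  have hprod := tsum_mul_tsum_of_summable_norm s1.norm s2.norm
  have hbij := (Equiv.ofBijective parMap parMap_bij).tsum_eq
    (fun a : ℤ × ℤ => fT τ (x + y) a.1 * fT τ (x - y) a.2)
  have hsum' := ((Equiv.ofBijective parMap parMap_bij).summable_iff).2 hsum
  have hl : HasSum (fun a : ℤ × ℤ => fT τ (x + y) (a.1 + a.2) * fT τ (x - y) (a.1 - a.2))
      (Complex.exp (-τ / 4) * ((∑' n, odT τ x n) * ∑' n, evT τ y n)) := by
    simp only [fT_even]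
    rw [tsum_mul_tsum_of_summable_norm (so x).norm (se y).norm]
    exact ((summable_mul_of_summable_norm (so x).norm (se y).norm).hasSum).mul_left _
  have hr : HasSum (fun a : ℤ × ℤ => fT τ (x + y) (a.1 + a.2) * fT τ (x - y) (a.1 - a.2 + 1))
      (-Complex.exp (-τ / 4) * ((∑' n, evT τ x n) * ∑' n, odT τ y n)) := by
    simp only [fT_odd]
    rw [tsum_mul_tsum_of_summable_norm (se x).norm (so y).norm]
    exact ((summable_mul_of_summable_norm (se x).norm (so y).norm).hasSum).mul_left _
  have htot := HasSum.sum (f := fun b => fT τ (x + y) (parMap b).1 * fT τ (x - y) (parMap b).2)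
    hl hr
  rw [hK, hK]
  have h1 : (∑' n, fT τ (x + y) n) * (∑' n, fT τ (x - y) n) = _ :=
    hprod.trans (hbij.symm.trans htot.tsum_eq)
  linear_combination K ^ 2 * h1

lemma fay (p : ℝ) (hp0 : 0 < p) (hp1 : p < 1) (x y u v : ℂ) :
    fth p (x + y) * fth p (x - y) * (fth p (u + v) * fth p (u - v)) -
      fth p (x + u) * fth p (x - u) * (fth p (y + v) * fth p (y - v)) +
      fth p (x + v) * fth p (x - v) * (fth p (y + u) * fth p (y - u)) = 0 := by
  obtain ⟨A, e, o, h⟩ := fth_rank_two p hp0 hp1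
  simp only [h]
  ring

/-! ### The entries in additive form and the nine sector identities -/

/-- Additive form of the entry `a`. -/
def ga (F : ℂ → ℂ) (η L u : ℂ) : ℂ := F u * F (L + η) / (F (u + η) * F L)
/-- Additive form of the entry `b`. -/
def gb (F : ℂ → ℂ) (η L u : ℂ) : ℂ := F η * F (L - u) / (F (u + η) * F L)
/-- Additive form of the entry `c`. -/
def gc (F : ℂ → ℂ) (η L u : ℂ) : ℂ := F η * F (L + u) / (F (u + η) * F L)
/-- Additive form of the entry `d`. -/
def gd (F : ℂ → ℂ) (η L u : ℂ) : ℂ := F u * F (L - η) / (F (u + η) * F L)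

lemma fayW (F : ℂ → ℂ) (hodd : ∀ x, F (-x) = -F x)
    (hfay : ∀ x y u v : ℂ, F (x + y) * F (x - y) * (F (u + v) * F (u - v)) -
      F (x + u) * F (x - u) * (F (y + v) * F (y - v)) +
      F (x + v) * F (x - v) * (F (y + u) * F (y - u)) = 0)
    (α β γ δ s a1 a2 a3 b1 b2 b3 b4 : ℂ) (hs : 2 * s = α + β + γ + δ)
    (ha1 : a1 = s - γ - δ) (ha2 : a2 = s - β - δ) (ha3 : a3 = s - β - γ)
    (hb1 : b1 = s - δ) (hb2 : b2 = s - γ) (hb3 : b3 = s - β) (hb4 : b4 = s - α) :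
    F α * F β * F γ * F δ = F s * F a1 * F a2 * F a3 + F b1 * F b2 * F b3 * F b4 := by
  have h := hfay ((α + β) / 2) ((α - β) / 2) ((γ + δ) / 2) ((γ - δ) / 2)
  rw [show (α + β) / 2 + (α - β) / 2 = α by ring, show (α + β) / 2 - (α - β) / 2 = β by ring,
    show (γ + δ) / 2 + (γ - δ) / 2 = γ by ring, show (γ + δ) / 2 - (γ - δ) / 2 = δ by ring,
    show (α + β) / 2 + (γ + δ) / 2 = s by linear_combination (-1 / 2) * hs,
    show (α + β) / 2 - (γ + δ) / 2 = a1 by rw [ha1]; linear_combination (-1 / 2) * hs,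
    show (α - β) / 2 + (γ - δ) / 2 = a2 by rw [ha2]; linear_combination (-1 / 2) * hs,
    show (α - β) / 2 - (γ - δ) / 2 = a3 by rw [ha3]; linear_combination (-1 / 2) * hs,
    show (α + β) / 2 + (γ - δ) / 2 = b1 by rw [hb1]; linear_combination (-1 / 2) * hs,
    show (α + β) / 2 - (γ - δ) / 2 = b2 by rw [hb2]; linear_combination (-1 / 2) * hs,
    show (α - β) / 2 + (γ + δ) / 2 = b3 by rw [hb3]; linear_combination (-1 / 2) * hs,
    show (α - β) / 2 - (γ + δ) / 2 = -b4 by rw [hb4]; linear_combination (1 / 2) * hs,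
    hodd] at h
  linear_combination h

lemma sector (F : ℂ → ℂ) (hodd : ∀ x, F (-x) = -F x)
    (hfay : ∀ x y u v : ℂ, F (x + y) * F (x - y) * (F (u + v) * F (u - v)) -
      F (x + u) * F (x - u) * (F (y + v) * F (y - v)) +
      F (x + v) * F (x - v) * (F (y + u) * F (y - u)) = 0)
    (η L u v : ℂ) (hu : F (u + η) ≠ 0) (hv : F (v + η) ≠ 0) (hw : F (u + v + η) ≠ 0)
    (hL : F L ≠ 0) (hM : F (L - η) ≠ 0) :
    (ga F η (L - η) v * ga F η L (u + v) = ga F η (L - η) (u + v) * ga F η L v) ∧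
    (ga F η (L - η) v * gc F η L (u + v) * gb F η (L - η) u + gc F η (L - η) v * ga F η (L - η) u
      = ga F η (L - η) (u + v) * gc F η L v) ∧
    (ga F η (L - η) v * gc F η L (u + v) * gd F η (L - η) u + gc F η (L - η) v * gc F η (L - η) u
      = gc F η (L - η) (u + v)) ∧
    (gb F η (L - η) v * gc F η L (u + v) * gb F η (L - η) u + gd F η (L - η) v * ga F η (L - η) u
      = ga F η L u * gd F η L v + gc F η L u * gb F η (L - η) (u + v) * gc F η L v) ∧
    (gb F η (L - η) v * ga F η L (u + v)
      = ga F η L u * gb F η L v + gc F η L u * gb F η (L - η) (u + v) * ga F η L v) ∧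
    (gb F η (L - η) v * gc F η L (u + v) * gd F η (L - η) u + gd F η (L - η) v * gc F η (L - η) u
      = gc F η L u * gd F η (L - η) (u + v)) ∧
    (gb F η L (u + v)
      = gb F η L u * gb F η L v + gd F η L u * gb F η (L - η) (u + v) * ga F η L v) ∧
    (gd F η L (u + v) * gb F η (L - η) u
      = gb F η L u * gd F η L v + gd F η L u * gb F η (L - η) (u + v) * gc F η L v) ∧
    (gd F η L (u + v) * gd F η (L - η) u = gd F η L u * gd F η (L - η) (u + v)) := by
  have K1 := fayW F hodd hfay v η (L + (u + v)) (L - η - u) (L + v) (-(L - η)) (u + v) (-(u + η))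
    (u + v + η) (-u) (L - η + v) L (by ring) (by ring) (by ring) (by ring) (by ring) (by ring)
    (by ring) (by ring)
  have K2 := fayW F hodd hfay v (L + (u + v)) u (L - η - η) (L - η + (u + v)) (v + η) (-(L - η))
    (-(u + η)) (u + v + η) (L - η + v) (-η) (L - η + u) (by ring) (by ring) (by ring) (by ring)
    (by ring) (by ring) (by ring) (by ring)
  have K3 := fayW F hodd hfay (L - η - v) (u + v) (u + η) L (L + u) (-η) (-v) (L - η - (u + v))
    u (L - η) (L - v) (u + v + η) (by ring) (by ring) (by ring) (by ring) (by ring) (by ring)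
    (by ring) (by ring)
  have K4 := fayW F hodd hfay η (L - η - v) (L + (u + v)) u (L + u) (-(u + v)) (v + η) (-(L - η))
    L (-v) (u + v + η) (L - η + u) (by ring) (by ring) (by ring) (by ring) (by ring) (by ring)
    (by ring) (by ring)
  have K5 := fayW F hodd hfay L (L + (u + v)) (L - η - u) (L - η - v) (2 * L - η) (u + v + η)
    (-u) (-v) (L + v) (L + u) (L - η - (u + v)) (L - η) (by ring) (by ring) (by ring) (by ring)
    (by ring) (by ring) (by ring) (by ring)
  have K6 := fayW F hodd hfay (L - η - η) L L L (2 * L - η) (-η) (-η) (-η) (L - η) (L - η)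
    (L - η) (L + η) (by ring) (by ring) (by ring) (by ring) (by ring) (by ring)
    (by ring) (by ring)
  have K7 := fayW F hodd hfay (L - (u + v)) (u + η) (v + η) L (L + η) (-v) (-u) (L - η - (u + v))
    η (L - v) (L - u) (u + v + η) (by ring) (by ring) (by ring) (by ring) (by ring) (by ring)
    (by ring) (by ring)
  have K8 := fayW F hodd hfay (u + v) (L - η - u) (v + η) L (L + v) (-η) (-(L - η - (u + v))) u
    v (L - η) (u + v + η) (L - u) (by ring) (by ring) (by ring) (by ring) (by ring) (by ring)
    (by ring) (by ring)
  simp only [hodd] at K1 K2 K3 K4 K5 K6 K7 K8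
  unfold ga gb gc gd
  simp only [sub_add_cancel]
  generalize F (L + (u + v)) = x1 at *
  generalize F (L - η - u) = x2 at *
  generalize F (L - η - v) = x3 at *
  generalize F (L - η - (u + v)) = x4 at *
  generalize F (L - η + (u + v)) = x5 at *
  generalize F (L - η + u) = x6 at *
  generalize F (L - η + v) = x7 at *
  generalize F (L - η - η) = x8 at *
  generalize F (L - (u + v)) = x9 at *
  generalize F (u + v + η) = y1 at *
  generalize F (u + η) = y2 at *
  generalize F (v + η) = y3 at *
  generalize F (L + u) = y4 at *
  generalize F (L + v) = y5 at *
  generalize F (L - u) = y6 at *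
  generalize F (L - v) = y7 at *
  generalize F (L - η) = y8 at *
  generalize F (L + η) = y9 at *
  generalize F (u + v) = z1 at *
  generalize F (2 * L - η) = z2 at *
  generalize F u = z3 at *
  generalize F v = z4 at *
  generalize F η = z5 at *
  generalize F L = z6 at *
  refine ⟨?_, ?_, ?_, ?_, ?_, ?_, ?_, ?_, ?_⟩
  · field_simp
  · rw [← sub_eq_zero]
    trans z5 / (y8 ^ 2 * y1 * y2 * y3) * (z4 * z5 * x1 * x2 - (y5 * -y8 * z1 * -y2 + y1 * -z3 * x7 * z6))
    · field_simp
      ring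
    · rw [K1]; ring
  · rw [← sub_eq_zero]
    trans z5 / (y8 ^ 2 * y1 * y2 * y3) * (z4 * x1 * z3 * x8 - (x5 * y3 * -y8 * -y2 + y1 * x7 * -z5 * x6))
    · field_simp
      ring
    · rw [K2]; ring
  · rw [← sub_eq_zero]
    trans 1 / (y8 ^ 2 * z6 ^ 2 * y1 * y2 * y3) *
      (z5 ^ 3 * (z6 * x1 * x2 * x3 - (z2 * y1 * -z3 * -z4 + y5 * y4 * x4 * y8)) +
      y1 * z3 * z4 * (x8 * z6 * z6 * z6 - (z2 * -z5 * -z5 * -z5 + y8 * y8 * y8 * y9)))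
    · field_simp
      ring
    · rw [K5, K6]; ring
  · rw [← sub_eq_zero]
    trans z5 * y9 / (y8 * z6 ^ 2 * y1 * y2 * y3) *
      (x3 * z1 * y2 * z6 - (y4 * -z5 * -z4 * x4 + z3 * y8 * y7 * y1))
    · field_simp
      ring
    · rw [K3]; ring
  · rw [← sub_eq_zero]
    trans z5 * x8 / (y8 ^ 2 * z6 * y1 * y2 * y3) *
      (z5 * x3 * x1 * z3 - (y4 * -z1 * y3 * -y8 + z6 * -z4 * y1 * x6))
    · field_simp
      ring
    · rw [K4]; ring
  · rw [← sub_eq_zero]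
    trans z5 / (z6 ^ 2 * y1 * y2 * y3) *
      (x9 * y2 * y3 * z6 - (y9 * -z4 * -z3 * x4 + z5 * y7 * y6 * y1))
    · field_simp
      ring
    · rw [K7]; ring
  · rw [← sub_eq_zero]
    trans z5 / (z6 ^ 2 * y1 * y2 * y3) *
      (z1 * x2 * y3 * z6 - (y5 * -z5 * -x4 * z3 + z4 * y8 * y1 * y6))
    · field_simp
      ring
    · rw [K8]; ring
  · field_simp

lemma ga_neg (F : ℂ → ℂ) (hodd : ∀ x, F (-x) = -F x) (η L u : ℂ) :
    ga F η (-L) u = gd F η L u := by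
  unfold ga gd
  rw [show -L + η = -(L - η) by ring, hodd, hodd, mul_neg, mul_neg, neg_div_neg_eq]

lemma gd_neg (F : ℂ → ℂ) (hodd : ∀ x, F (-x) = -F x) (η L u : ℂ) :
    gd F η (-L) u = ga F η L u := by
  rw [← ga_neg F hodd, neg_neg]

lemma gb_neg (F : ℂ → ℂ) (hodd : ∀ x, F (-x) = -F x) (η L u : ℂ) :
    gb F η (-L) u = gc F η L u := by
  unfold gb gc
  rw [show -L - u = -(L + u) by ring, hodd, hodd, mul_neg, mul_neg, neg_div_neg_eq]

lemma gc_neg (F : ℂ → ℂ) (hodd : ∀ x, F (-x) = -F x) (η L u : ℂ) :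
    gc F η (-L) u = gb F η L u := by
  rw [← gb_neg F hodd, neg_neg]

lemma theta_ratio (p : ℝ) (x1 x2 x3 x4 : ℂ) (h : x1 + x2 = x3 + x4) :
    theta p (Complex.exp x1) * theta p (Complex.exp x2) /
      (theta p (Complex.exp x3) * theta p (Complex.exp x4)) =
    fth p x1 * fth p x2 / (fth p x3 * fth p x4) := by
  unfold fth
  have e : Complex.exp (-x1 / 2) * Complex.exp (-x2 / 2) =
      Complex.exp (-x3 / 2) * Complex.exp (-x4 / 2) := by
    rw [← Complex.exp_add, ← Complex.exp_add]
    congr 1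
    linear_combination (-1 / 2) * h
  have hne : Complex.exp (-x3 / 2) * Complex.exp (-x4 / 2) ≠ 0 :=
    mul_ne_zero (Complex.exp_ne_zero _) (Complex.exp_ne_zero _)
  rw [mul_mul_mul_comm, mul_mul_mul_comm (Complex.exp (-x3 / 2)), e, mul_div_mul_left _ _ hne]

section entries

variable (p q : ℝ) (lam u : ℂ)

lemma qp_mul_exp (l : ℂ) : qp q l * Complex.exp u = Complex.exp (l * (Real.log q : ℂ) + u) := by
  rw [qp, Complex.exp_add]

lemma Ra_add : Ra p q lam (Complex.exp u) =
    ga (fth p) (2 * (Real.log q : ℂ)) (2 * (Real.log q : ℂ) * (lam + 1)) u := by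
  unfold Ra ga
  rw [qp_mul_exp, qp, qp, theta_ratio _ _ _ _ _ (by ring)]
  ring_nf

lemma Rc_add : Rc p q lam (Complex.exp u) =
    gc (fth p) (2 * (Real.log q : ℂ)) (2 * (Real.log q : ℂ) * (lam + 1)) u := by
  unfold Rc gc
  rw [qp_mul_exp, qp_mul_exp, qp, qp, theta_ratio _ _ _ _ _ (by ring)]
  ring_nf

lemma Rb_add (hp0 : 0 < p) (hp1 : p < 1) : Rb p q lam (Complex.exp u) =
    gb (fth p) (2 * (Real.log q : ℂ)) (2 * (Real.log q : ℂ) * (lam + 1)) u := by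
  rw [← gc_neg _ (fth_neg p hp0 hp1)]
  unfold Rb gc
  rw [qp_mul_exp, qp_mul_exp, qp, qp, theta_ratio _ _ _ _ _ (by ring)]
  ring_nf

lemma Rd_add (hp0 : 0 < p) (hp1 : p < 1) : Rd p q lam (Complex.exp u) =
    gd (fth p) (2 * (Real.log q : ℂ)) (2 * (Real.log q : ℂ) * (lam + 1)) u := by
  rw [← ga_neg _ (fth_neg p hp0 hp1)]
  unfold Rd ga
  rw [qp_mul_exp, qp, qp, theta_ratio _ _ _ _ _ (by ring)]
  ring_nf

lemma fth_ne (x y : ℂ) (hxy : y = Complex.exp x) (h : theta p y ≠ 0) : fth p x ≠ 0 := by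
  subst hxy
  exact mul_ne_zero (Complex.exp_ne_zero _) h

end entries

set_option maxHeartbeats 4000000 in
/-- The quantum dynamical Yang–Baxter equation with spectral parameter for the
ABF `R`-matrix:
`R¹²(λ−h⁽³⁾, z₁/z₂) R¹³(λ, z₁/z₃) R²³(λ−h⁽¹⁾, z₂/z₃)
  = R²³(λ, z₂/z₃) R¹³(λ−h⁽²⁾, z₁/z₃) R¹²(λ, z₁/z₂)`. -/
theorem ABF_QDYBE (p q : ℝ) (hp0 : 0 < p) (hp1 : p < 1) (hq0 : 0 < q) (hq1 : q < 1)
    (lam z1 z2 z3 : ℂ) (hz1 : z1 ≠ 0) (hz2 : z2 ≠ 0) (hz3 : z3 ≠ 0)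
    (h12 : theta p (qp q 2 * (z1 / z2)) ≠ 0)
    (h13 : theta p (qp q 2 * (z1 / z3)) ≠ 0)
    (h23 : theta p (qp q 2 * (z2 / z3)) ≠ 0)
    (hlam : ∀ m : ℤ, m = -1 ∨ m = 0 ∨ m = 1 →
      theta p (qp q (2 * (lam + (m : ℂ) + 1))) ≠ 0 ∧
        theta p (qp q (-2 * (lam + (m : ℂ) + 1))) ≠ 0) :
    R12 p q (fun e => lam - wt e) (z1 / z2) * R13 p q (fun _ => lam) (z1 / z3) *
        R23 p q (fun e => lam - wt e) (z2 / z3) =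
      R23 p q (fun _ => lam) (z2 / z3) * R13 p q (fun e => lam - wt e) (z1 / z3) *
        R12 p q (fun _ => lam) (z1 / z2) := by
  obtain ⟨u, hu⟩ : ∃ u, z1 / z2 = Complex.exp u :=
    ⟨_, (Complex.exp_log (div_ne_zero hz1 hz2)).symm⟩
  obtain ⟨v, hv⟩ : ∃ v, z2 / z3 = Complex.exp v :=
    ⟨_, (Complex.exp_log (div_ne_zero hz2 hz3)).symm⟩
  have hw : z1 / z3 = Complex.exp (u + v) := by
    rw [Complex.exp_add, ← hu, ← hv]
    field_simp
  rw [hu] at h12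
  rw [hw] at h13
  rw [hv] at h23
  rw [hu, hv, hw]
  have hodd := fth_neg p hp0 hp1
  have hfay := fay p hp0 hp1
  have eRa := Ra_add p q
  have eRb := fun l x => Rb_add p q l x hp0 hp1
  have eRc := Rc_add p q
  have eRd := fun l x => Rd_add p q l x hp0 hp1
  obtain ⟨η, hη⟩ : ∃ η : ℂ, η = 2 * (Real.log q : ℂ) := ⟨_, rfl⟩
  simp only [← hη] at eRa eRb eRc eRd
  obtain ⟨L, hL⟩ : ∃ L : ℂ, L = η * (lam + 1) := ⟨_, rfl⟩
  have n1 : fth p (u + η) ≠ 0 := fth_ne p _ _ (by rw [qp_mul_exp, hη]; ring_nf) h12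
  have n2 : fth p (v + η) ≠ 0 := fth_ne p _ _ (by rw [qp_mul_exp, hη]; ring_nf) h23
  have n3 : fth p (u + v + η) ≠ 0 := fth_ne p _ _ (by rw [qp_mul_exp, hη]; ring_nf) h13
  have n4 : fth p L ≠ 0 :=
    fth_ne p _ _ (by rw [qp, hL, hη]; push_cast; ring_nf) (hlam 0 (by norm_num)).1
  have n5 : fth p (L - η) ≠ 0 :=
    fth_ne p _ _ (by rw [qp, hL, hη]; push_cast; ring_nf) (hlam (-1) (by norm_num)).1
  have n6 : fth p (L + η) ≠ 0 :=
    fth_ne p _ _ (by rw [qp, hL, hη]; push_cast; ring_nf) (hlam 1 (by norm_num)).1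
  obtain ⟨s1, s2, s3, s4, s5, s6, s7, s8, s9⟩ := sector (fth p) hodd hfay η L u v n1 n2 n3 n4 n5
  have S := sector (fth p) hodd hfay η (-L) u v n1 n2 n3
    (by rw [hodd]; exact neg_ne_zero.2 n4)
    (by rw [show -L - η = -(L + η) by ring, hodd]; exact neg_ne_zero.2 n6)
  rw [show -L - η = -(L + η) by ring] at S
  simp only [ga_neg _ hodd, gb_neg _ hodd, gc_neg _ hodd, gd_neg _ hodd] at S
  obtain ⟨t1, t2, t3, t4, t5, t6, t7, t8, t9⟩ := S
  have w0 : η * lam = L - η := by rw [hL]; ring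
  have w1 : η * (lam + 1 + 1) = L + η := by rw [hL]; ring
  ext ⟨i1, i2, i3⟩ ⟨j1, j2, j3⟩
  fin_cases i1 <;> fin_cases i2 <;> fin_cases i3 <;> fin_cases j1 <;> fin_cases j2 <;>
    fin_cases j3 <;>
    simp [Matrix.mul_apply, Fintype.sum_prod_type, R12, R13, R23, Rmat, wt, eRa, eRb, eRc, eRd,
      w0, w1, ← hL] <;>
    first
    | linear_combination s1
    | linear_combination s2
    | linear_combination s3
    | linear_combination s4
    | linear_combination s5
    | linear_combination s6
    | linear_combination s7
    | linear_combination s8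
    | linear_combination s9
    | linear_combination t1
    | linear_combination t2
    | linear_combination t3
    | linear_combination t4
    | linear_combination t5
    | linear_combination t6
    | linear_combination t7
    | linear_combination t8
    | linear_combination t9

end
end

section
/- (Action of the quantum determinant in the dynamical representation.) For every integer k ≥ 0 and all λ, ω ∈ ℂ and nonzero complex z for which all theta factors appearing in denominators are nonzero, (F(λ)/F(λ−ω+2k)) · [ D_k(λ, z)·A_k(λ+1, q²z) − B_{k−1}(λ, z)·C_k(λ+1, q²z) ] = q^{ω}·θ(z q^{1−ω})/θ(z q^{1+ω}), where for k = 0 the term B_{k−1}(λ,z)C_k(λ+1,q²z) is interpreted as 0 (since C_0 = 0). In particular the quantum determinant acts in the dynamical representation π^ω by the scalar q^{ω}θ(z q^{1−ω})/θ(z q^{1+ω}), which equals 1 when ω = 0. -/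
noncomputable section

open Finset

/-! ### Auxiliary results -/

open Filter Topology

/-- Finite `p`-factorial `(p;p)_n`. -/
def auxQ (p : ℝ) (n : ℕ) : ℂ := ∏ j ∈ Finset.range n, (1 + -(p : ℂ) ^ (j + 1))

/-- `1/(p;p)_i`, extended by zero to negative integers. -/
def auxE (p : ℝ) (i : ℤ) : ℂ := if i < 0 then 0 else (auxQ p i.toNat)⁻¹

/-- Weights in the triple product. -/
def auxW (r : ℝ) (m : ℤ) : ℂ := (-1) ^ m * (r : ℂ) ^ (2 * m ^ 2 - 2 * m)

lemma aux_factor_ne {p : ℝ} (hp0 : 0 < p) (hp1 : p < 1) (j : ℕ) :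
    (1 + -(p : ℂ) ^ (j + 1)) ≠ 0 := by
  have h : p ^ (j + 1) < 1 := pow_lt_one₀ hp0.le hp1 (by omega)
  have h2 : (1 - p ^ (j + 1) : ℝ) ≠ 0 := by linarith
  intro h3
  apply h2
  have : ((1 - p ^ (j + 1) : ℝ) : ℂ) = 0 := by
    push_cast
    rw [← h3]; ring
  exact_mod_cast this

lemma auxQ_ne {p : ℝ} (hp0 : 0 < p) (hp1 : p < 1) (n : ℕ) : auxQ p n ≠ 0 :=
  Finset.prod_ne_zero_iff.mpr fun j _ => aux_factor_ne hp0 hp1 j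

lemma auxQ_succ (p : ℝ) (n : ℕ) : auxQ p (n + 1) = auxQ p n * (1 - (p : ℂ) ^ (n + 1)) := by
  rw [auxQ, Finset.prod_range_succ, ← auxQ, sub_eq_add_neg]

lemma auxE_rec {p : ℝ} (hp0 : 0 < p) (hp1 : p < 1) (i : ℤ) :
    auxE p i = (1 - (p : ℂ) ^ (i + 1)) * auxE p (i + 1) := by
  unfold auxE
  rcases lt_trichotomy (i + 1) 0 with h | h | h
  · rw [if_pos (by omega), if_pos h, mul_zero]
  · rw [if_pos (by omega), h]; simp
  · rw [if_neg (by omega), if_neg (by omega)]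
    obtain ⟨n, rfl⟩ : ∃ n : ℕ, i = n := ⟨i.toNat, by omega⟩
    have : ((n : ℤ) + 1).toNat = n + 1 := by omega
    rw [this, Int.toNat_natCast, auxQ_succ]
    have h1 := auxQ_ne hp0 hp1 n
    have h2 := aux_factor_ne hp0 hp1 n
    rw [← sub_eq_add_neg] at h2
    have h3 : (p : ℂ) ^ ((n : ℤ) + 1) = (p : ℂ) ^ (n + 1) := by
      exact_mod_cast zpow_natCast (p : ℂ) (n + 1)
    rw [h3]
    field_simp

lemma aux_summable_p {p : ℝ} (hp0 : 0 < p) (hp1 : p < 1) (c : ℂ) :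
    Summable fun j : ℕ => ‖c * (p : ℂ) ^ j‖ := by
  simp only [norm_mul, norm_pow]
  refine Summable.mul_left _ (summable_geometric_of_lt_one (norm_nonneg _) ?_)
  simpa [abs_of_pos hp0] using hp1

lemma auxQ_tendsto {p : ℝ} (hp0 : 0 < p) (hp1 : p < 1) :
    ∃ L : ℂ, L ≠ 0 ∧ Tendsto (auxQ p) atTop (𝓝 L) := by
  have hs : Summable fun j : ℕ => ‖-(p : ℂ) ^ (j + 1)‖ := by
    convert aux_summable_p hp0 hp1 (-(p : ℂ)) using 3
    ring
  exact ⟨_, tprod_one_add_ne_zero_of_summable (aux_factor_ne hp0 hp1) hs,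
    (multipliable_one_add_of_summable hs).hasProd.tendsto_prod_nat⟩

lemma auxE_tendsto {p : ℝ} {L : ℂ} (hL : L ≠ 0) (h : Tendsto (auxQ p) atTop (𝓝 L)) :
    Tendsto (fun n : ℕ => auxE p n) atTop (𝓝 L⁻¹) := by
  have : (fun n : ℕ => auxE p n) = fun n => (auxQ p n)⁻¹ := by
    funext n
    rw [auxE, if_neg (by omega), Int.toNat_natCast]
  rw [this]
  exact h.inv₀ hL

lemma aux_bdd {f : ℕ → ℂ} {L : ℂ} (h : Tendsto f atTop (𝓝 L)) : ∃ M, ∀ n, ‖f n‖ ≤ M := by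
  obtain ⟨M, hM⟩ := h.norm.bddAbove_range
  exact ⟨M, fun n => hM ⟨n, rfl⟩⟩

lemma auxE_bdd {p : ℝ} {L : ℂ} (hL : L ≠ 0) (h : Tendsto (auxQ p) atTop (𝓝 L)) :
    ∃ M, 0 ≤ M ∧ ∀ i, ‖auxE p i‖ ≤ M := by
  obtain ⟨M, hM⟩ := aux_bdd (auxE_tendsto hL h)
  have h0 : 0 ≤ M := (norm_nonneg _).trans (hM 0)
  refine ⟨M, h0, fun i => ?_⟩
  by_cases hi : i < 0
  · rw [auxE, if_pos hi]; simpa using h0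
  · obtain ⟨n, rfl⟩ : ∃ n : ℕ, i = n := ⟨i.toNat, by omega⟩
    exact hM n

lemma auxW_succ {r : ℝ} (hr : 0 < r) (m : ℤ) :
    auxW r (m + 1) = -((r ^ 4 : ℝ) : ℂ) ^ m * auxW r m := by
  have hr' : (r : ℂ) ≠ 0 := by exact_mod_cast hr.ne'
  unfold auxW
  have : 2 * (m + 1) ^ 2 - 2 * (m + 1) = 4 * m + (2 * m ^ 2 - 2 * m) := by ring
  rw [this, zpow_add₀ hr', zpow_add₀ (by norm_num : (-1 : ℂ) ≠ 0), zpow_mul]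
  push_cast
  have : (r : ℂ) ^ (4 : ℤ) = (r : ℂ) ^ 4 := by norm_cast
  rw [this]
  ring

/-- Finite triple product coefficients. -/
def auxC (r : ℝ) (z : ℂ) (n : ℕ) (m : ℤ) : ℂ :=
  auxQ (r ^ 4) (2 * n) * auxE (r ^ 4) (n + m) * auxE (r ^ 4) (n - m) * (auxW r m * z ^ m)

lemma auxC_rec {r : ℝ} (hr : 0 < r) (hr1 : r < 1) {z : ℂ} (hz : z ≠ 0) (n : ℕ) (m : ℤ) :
    auxC r z (n + 1) (m + 1) =
      (1 + ((r ^ 4 : ℝ) : ℂ) ^ (2 * n + 1)) * auxC r z n (m + 1)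
      - ((r ^ 4 : ℝ) : ℂ) ^ n * z * auxC r z n m
      - ((r ^ 4 : ℝ) : ℂ) ^ (n + 1) / z * auxC r z n (m + 2) := by
  have hp0 : 0 < r ^ 4 := by positivity
  have hp1 : r ^ 4 < 1 := pow_lt_one₀ hr.le hr1 (by norm_num)
  have e2 : auxW r (m + 2) = -((r ^ 4 : ℝ) : ℂ) ^ (m + 1) * auxW r (m + 1) := by
    rw [← auxW_succ hr]; ring_nf
  have e1 := auxW_succ hr m
  have hQ : auxQ (r ^ 4) (2 * (n + 1)) = auxQ (r ^ 4) (2 * n) *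
      (1 - ((r ^ 4 : ℝ) : ℂ) ^ (2 * n + 1)) * (1 - ((r ^ 4 : ℝ) : ℂ) ^ (2 * n + 2)) := by
    rw [show 2 * (n + 1) = 2 * n + 1 + 1 by ring, auxQ_succ, auxQ_succ]
  have z1 : z ^ (m + 1) = z ^ m * z := zpow_add_one₀ hz m
  have z2 : z ^ (m + 2) = z ^ m * z * z := by
    rw [show m + 2 = m + 1 + 1 by ring, zpow_add_one₀ hz, z1]
  unfold auxC
  rw [e2, e1, hQ, z2, z1]
  generalize r ^ 4 = p at *
  have hpc : (p : ℂ) ≠ 0 := by exact_mod_cast hp0.ne'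
  -- reduce all to E (n+m+2), E(n-m)
  have a1 := auxE_rec hp0 hp1 (n + m + 1)
  have a0 := auxE_rec hp0 hp1 (n + m)
  have b1 := auxE_rec hp0 hp1 (n - m - 1)
  have b2 := auxE_rec hp0 hp1 (n - m - 2)
  rw [show (n : ℤ) + m + 1 + 1 = n + m + 2 by ring] at a1
  rw [show (n : ℤ) - m - 1 + 1 = n - m by ring] at b1
  rw [show (n : ℤ) - m - 2 + 1 = n - m - 1 by ring] at b2
  rw [show ((n + 1 : ℕ) : ℤ) + (m + 1) = n + m + 2 by push_cast; ring,
    show ((n + 1 : ℕ) : ℤ) - (m + 1) = n - m by push_cast; ring,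
    show (n : ℤ) + (m + 1) = n + m + 1 by ring,
    show (n : ℤ) - (m + 1) = n - m - 1 by ring,
    show (n : ℤ) + (m + 2) = n + m + 2 by ring,
    show (n : ℤ) - (m + 2) = n - m - 2 by ring]
  rw [a0, b2, a1, b1]
  have p1 : (p : ℂ) ^ ((n : ℤ) + m + 1) = p ^ n * p ^ m * p := by
    rw [zpow_add_one₀ hpc, zpow_add₀ hpc, zpow_natCast]
  have p2 : (p : ℂ) ^ ((n : ℤ) + m + 2) = p ^ n * p ^ m * p * p := by
    rw [show (n : ℤ) + m + 2 = n + m + 1 + 1 by ring, zpow_add_one₀ hpc, p1]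
  have p3 : (p : ℂ) ^ ((n : ℤ) - m) = p ^ n / p ^ m := by
    rw [zpow_sub₀ hpc, zpow_natCast]
  have p4 : (p : ℂ) ^ ((n : ℤ) - m - 1) = p ^ n / p ^ m / p := by
    rw [zpow_sub_one₀ hpc, p3]; ring
  have p5 : (p : ℂ) ^ (m + 1) = p ^ m * p := zpow_add_one₀ hpc m
  have p6 : (p : ℂ) ^ (2 * n + 1) = p ^ n * p ^ n * p := by ring
  have p7 : (p : ℂ) ^ (2 * n + 2) = p ^ n * p ^ n * p * p := by ring
  have p8 : (p : ℂ) ^ (n + 1) = p ^ n * p := by ring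
  rw [p1, p2, p3, p4, p5, p6, p7, p8]
  have hy : (p : ℂ) ^ m ≠ 0 := zpow_ne_zero _ hpc
  generalize (p : ℂ) ^ m = Y at *
  generalize (p : ℂ) ^ n = X at *
  field_simp
  ring

lemma auxC_hasSum {r : ℝ} (hr : 0 < r) (hr1 : r < 1) {z : ℂ} (hz : z ≠ 0) (n : ℕ) :
    HasSum (auxC r z n) (∏ j ∈ Finset.range n,
      ((1 - z * ((r ^ 4 : ℝ) : ℂ) ^ j) * (1 - ((r ^ 4 : ℝ) : ℂ) ^ (j + 1) / z))) := by
  induction n with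
  | zero =>
    have : auxC r z 0 0 = 1 := by simp [auxC, auxQ, auxE, auxW]
    rw [Finset.prod_range_zero, ← this]
    refine hasSum_single 0 fun m hm => ?_
    unfold auxC auxE
    rcases lt_or_gt_of_ne hm with h | h
    · simp [h]
    · simp [h]
  | succ n ih =>
    rw [Finset.prod_range_succ]
    rw [← (Equiv.addRight (1 : ℤ)).hasSum_iff]
    have s1 := (Equiv.addRight (1 : ℤ)).hasSum_iff.mpr ih
    have s2 := (Equiv.addRight (2 : ℤ)).hasSum_iff.mpr ih
    have := ((s1.mul_left (1 + ((r ^ 4 : ℝ) : ℂ) ^ (2 * n + 1))).sub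
      (ih.mul_left (((r ^ 4 : ℝ) : ℂ) ^ n * z))).sub
      (s2.mul_left (((r ^ 4 : ℝ) : ℂ) ^ (n + 1) / z))
    have hf : auxC r z (n + 1) ∘ (Equiv.addRight (1 : ℤ)) = fun b =>
        (1 + ((r ^ 4 : ℝ) : ℂ) ^ (2 * n + 1)) * (auxC r z n ∘ (Equiv.addRight (1 : ℤ))) b
        - ((r ^ 4 : ℝ) : ℂ) ^ n * z * auxC r z n b
        - ((r ^ 4 : ℝ) : ℂ) ^ (n + 1) / z * (auxC r z n ∘ (Equiv.addRight (2 : ℤ))) b := by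
      funext m
      exact auxC_rec hr hr1 hz n m
    rw [hf]
    have hv : ∀ P : ℂ, P * ((1 - z * ((r ^ 4 : ℝ) : ℂ) ^ n) *
        (1 - ((r ^ 4 : ℝ) : ℂ) ^ (n + 1) / z)) =
        (1 + ((r ^ 4 : ℝ) : ℂ) ^ (2 * n + 1)) * P - ((r ^ 4 : ℝ) : ℂ) ^ n * z * P
        - ((r ^ 4 : ℝ) : ℂ) ^ (n + 1) / z * P := by
      intro P
      field_simp
      ring
    rw [hv]
    exact this

lemma aux_summable {r : ℝ} (hr : 0 < r) (hr1 : r < 1) {x : ℂ} (hx : x ≠ 0) :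
    Summable fun n : ℤ => (r : ℂ) ^ (n ^ 2) * x ^ n := by
  have hpi : (Real.pi : ℂ) ≠ 0 := by exact_mod_cast Real.pi_ne_zero
  have h := (summable_jacobiTheta₂_term_iff (Complex.log x / (2 * Real.pi * Complex.I))
    (((-Real.log r / Real.pi : ℝ) : ℂ) * Complex.I)).mpr (by
      have := Real.log_neg hr hr1
      simp only [Complex.im_ofReal_mul, Complex.I_im, mul_one]
      exact div_pos (by linarith) Real.pi_pos)
  convert h using 2 with n
  unfold jacobiTheta₂_term
  rw [Complex.exp_add]
  have e1 : x ^ n = Complex.exp (2 * Real.pi * Complex.I * n *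
      (Complex.log x / (2 * Real.pi * Complex.I))) := by
    rw [show 2 * Real.pi * Complex.I * n * (Complex.log x / (2 * Real.pi * Complex.I))
      = n * Complex.log x by field_simp [Complex.I_ne_zero], Complex.exp_int_mul,
      Complex.exp_log hx]
  have e2 : (r : ℂ) ^ (n ^ 2) = Complex.exp (Real.pi * Complex.I * n ^ 2 *
      (((-Real.log r / Real.pi : ℝ) : ℂ) * Complex.I)) := by
    have : Real.pi * Complex.I * n ^ 2 * (((-Real.log r / Real.pi : ℝ) : ℂ) * Complex.I)
      = ((n ^ 2 : ℤ) : ℂ) * (Real.log r : ℂ) := by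
      push_cast
      have : Complex.I * Complex.I = -1 := Complex.I_mul_I
      field_simp
      linear_combination (-(n : ℂ) ^ 2 * (Real.log r : ℂ)) * this
    rw [this, Complex.exp_int_mul, ← Complex.ofReal_exp, Real.exp_log hr]
  rw [e1, e2, mul_comm]

lemma auxW_summable {r : ℝ} (hr : 0 < r) (hr1 : r < 1) {z : ℂ} (hz : z ≠ 0) :
    Summable fun m : ℤ => auxW r m * z ^ m := by
  have hr' : (r : ℂ) ≠ 0 := by exact_mod_cast hr.ne'
  have h := aux_summable (r := r ^ 2) (by positivity) (pow_lt_one₀ hr.le hr1 (by norm_num))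
    (x := -z / (r : ℂ) ^ 2) (div_ne_zero (neg_ne_zero.mpr hz) (pow_ne_zero 2 hr'))
  convert h using 2 with m
  unfold auxW
  have : ((r ^ 2 : ℝ) : ℂ) = (r : ℂ) ^ (2 : ℤ) := by push_cast; norm_cast
  have h2 : (r : ℂ) ^ 2 = (r : ℂ) ^ (2 : ℤ) := by norm_cast
  rw [this, h2, div_zpow, ← zpow_mul, ← zpow_mul, zpow_sub₀ hr', neg_eq_neg_one_mul z, mul_zpow]
  ring

lemma aux_theta {r : ℝ} (hr : 0 < r) (hr1 : r < 1) :
    ∃ c : ℂ, ∀ z : ℂ, z ≠ 0 → theta (r ^ 4) z = c * ∑' m : ℤ, auxW r m * z ^ m := by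
  have hp0 : 0 < r ^ 4 := by positivity
  have hp1 : r ^ 4 < 1 := pow_lt_one₀ hr.le hr1 (by norm_num)
  obtain ⟨L, hL, hQ⟩ := auxQ_tendsto hp0 hp1
  have hE := auxE_tendsto hL hQ
  obtain ⟨M, hM0, hM⟩ := auxE_bdd hL hQ
  obtain ⟨N, hN⟩ := aux_bdd hQ
  have hN0 : 0 ≤ N := (norm_nonneg _).trans (hN 0)
  refine ⟨L * L⁻¹ * L⁻¹, fun z hz => ?_⟩
  have hlim : Tendsto (fun n => ∑' m, auxC r z n m) atTop
      (𝓝 (∑' m : ℤ, L * L⁻¹ * L⁻¹ * (auxW r m * z ^ m))) := by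
    refine tendsto_tsum_of_dominated_convergence
      (bound := fun m => N * M * M * ‖auxW r m * z ^ m‖)
      ((auxW_summable hr hr1 hz).norm.mul_left _) (fun m => ?_) (Eventually.of_forall fun n m => ?_)
    · have t1 : Tendsto (fun n : ℕ => auxQ (r ^ 4) (2 * n)) atTop (𝓝 L) :=
        hQ.comp (tendsto_id.const_mul_atTop' (by norm_num))
      have key : ∀ i : ℤ, Tendsto (fun n : ℕ => auxE (r ^ 4) (n + i)) atTop (𝓝 L⁻¹) := by
        intro i
        have ht : Tendsto (fun n : ℕ => ((n : ℤ) + i).toNat) atTop atTop := by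
          refine tendsto_atTop.mpr fun b => ?_
          filter_upwards [eventually_ge_atTop (b + i.natAbs)] with n hn
          omega
        refine (hE.comp ht).congr' ?_
        filter_upwards [eventually_ge_atTop i.natAbs] with n hn
        simp only [Function.comp]
        congr 1
        omega
      exact ((t1.mul (key m)).mul (by simpa [sub_eq_add_neg] using key (-m))).mul_const _
    · unfold auxC
      rw [norm_mul, norm_mul, norm_mul]
      gcongr
      · exact hN _
      · exact hM _
      · exact hM _
  have hprod : Tendsto (fun n => ∑' m, auxC r z n m) atTop (𝓝 (theta (r ^ 4) z)) := by
    have h1 : Summable fun j : ℕ => ‖-z * ((r ^ 4 : ℝ) : ℂ) ^ j‖ := aux_summable_p hp0 hp1 _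
    have h2 : Summable fun j : ℕ => ‖-((r ^ 4 : ℝ) : ℂ) / z * ((r ^ 4 : ℝ) : ℂ) ^ j‖ :=
      aux_summable_p hp0 hp1 _
    have h3 := ((multipliable_one_add_of_summable h1).mul
      (multipliable_one_add_of_summable h2)).hasProd.tendsto_prod_nat
    have h4 : (fun j : ℕ => (1 + -z * ((r ^ 4 : ℝ) : ℂ) ^ j) *
        (1 + -((r ^ 4 : ℝ) : ℂ) / z * ((r ^ 4 : ℝ) : ℂ) ^ j)) = fun j =>
        ((1 - z * ((r ^ 4 : ℝ) : ℂ) ^ j) * (1 - ((r ^ 4 : ℝ) : ℂ) ^ (j + 1) / z)) := by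
      funext j; ring
    rw [h4] at h3
    unfold theta
    refine h3.congr fun n => ?_
    exact (auxC_hasSum hr hr1 hz n).tsum_eq.symm
  rw [← tsum_mul_left]
  exact tendsto_nhds_unique hprod hlim

/-- Even part of the theta series. -/
def auxEv (r : ℝ) (x : ℂ) : ℂ := ∑' a : ℤ, (r : ℂ) ^ ((2 * a) ^ 2) * x ^ (2 * a)

/-- Odd part of the theta series. -/
def auxOd (r : ℝ) (x : ℂ) : ℂ := ∑' a : ℤ, (r : ℂ) ^ ((2 * a + 1) ^ 2) * x ^ (2 * a + 1)

lemma auxEv_summable {r : ℝ} (hr : 0 < r) (hr1 : r < 1) {x : ℂ} (hx : x ≠ 0) :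
    Summable fun a : ℤ => (r : ℂ) ^ ((2 * a) ^ 2) * x ^ (2 * a) :=
  (aux_summable hr hr1 hx).comp_injective (i := fun a : ℤ => 2 * a) fun a b h => by
    simp only at h; omega

lemma auxOd_summable {r : ℝ} (hr : 0 < r) (hr1 : r < 1) {x : ℂ} (hx : x ≠ 0) :
    Summable fun a : ℤ => (r : ℂ) ^ ((2 * a + 1) ^ 2) * x ^ (2 * a + 1) :=
  (aux_summable hr hr1 hx).comp_injective (i := fun a : ℤ => 2 * a + 1) fun a b h => by
    simp only at h; omega

lemma aux_hasSum_mul {f g : ℤ → ℂ} (hf : Summable f) (hg : Summable g) (c : ℂ) :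
    HasSum (fun ab : ℤ × ℤ => c * (f ab.1 * g ab.2)) (c * ((∑' a, f a) * ∑' b, g b)) := by
  rw [tsum_mul_tsum_of_summable_norm hf.norm hg.norm]
  exact (summable_mul_of_summable_norm hf.norm hg.norm).hasSum.mul_left c

lemma aux_term {r : ℝ} (hr : 0 < r) {x y : ℂ} (hx : x ≠ 0) (hy : y ≠ 0) (m n : ℤ) :
    auxW r m * (x * y) ^ m * (auxW r n * (x / y) ^ n) =
      (-1) ^ (m + n) * (r : ℂ) ^ (2 * m ^ 2 - 2 * m + (2 * n ^ 2 - 2 * n)) *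
        x ^ (m + n) * y ^ (m - n) := by
  have hr' : (r : ℂ) ≠ 0 := by exact_mod_cast hr.ne'
  unfold auxW
  rw [mul_zpow, div_zpow, zpow_add₀ hr', zpow_add₀ hx, zpow_sub₀ hy,
    zpow_add₀ (by norm_num : (-1 : ℂ) ≠ 0)]
  ring

lemma aux_prod {r : ℝ} (hr : 0 < r) (hr1 : r < 1) {x y : ℂ} (hx : x ≠ 0) (hy : y ≠ 0) :
    (∑' m : ℤ, auxW r m * (x * y) ^ m) * (∑' n : ℤ, auxW r n * (x / y) ^ n) =
      (r : ℂ)⁻¹ * x * (auxOd r x * auxEv r y) + -((r : ℂ)⁻¹ * x) * (auxEv r x * auxOd r y) := by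
  have hr' : (r : ℂ) ≠ 0 := by exact_mod_cast hr.ne'
  have s1 := (auxW_summable hr hr1 (mul_ne_zero hx hy)).norm
  have s2 := (auxW_summable hr hr1 (div_ne_zero hx hy)).norm
  rw [tsum_mul_tsum_of_summable_norm s1 s2]
  let f0 : ℤ × ℤ → ℤ × ℤ := fun ab => (ab.1 + 1 + ab.2, ab.1 + 1 - ab.2)
  let f1 : ℤ × ℤ → ℤ × ℤ := fun ab => (ab.1 + ab.2 + 1, ab.1 - ab.2)
  have i0 : Function.Injective f0 := by
    rintro ⟨a, b⟩ ⟨c, d⟩ h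
    simp only [f0, Prod.mk.injEq] at h ⊢
    omega
  have i1 : Function.Injective f1 := by
    rintro ⟨a, b⟩ ⟨c, d⟩ h
    simp only [f1, Prod.mk.injEq] at h ⊢
    omega
  have hc : IsCompl (Set.range f0) (Set.range f1) := by
    constructor
    · rw [Set.disjoint_left]
      rintro _ ⟨⟨a, b⟩, rfl⟩ ⟨⟨c, d⟩, h⟩
      simp only [f0, f1, Prod.mk.injEq] at h
      omega
    · rw [codisjoint_iff_le_sup]
      rintro ⟨m, n⟩ -
      rcases Int.even_or_odd' (m + n) with ⟨k, hk | hk⟩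
      · exact Or.inl ⟨(k - 1, m - k), by simp only [f0, Prod.mk.injEq]; omega⟩
      · exact Or.inr ⟨(k, m - k - 1), by simp only [f1, Prod.mk.injEq]; omega⟩
  refine (HasSum.add_isCompl hc ?_ ?_).tsum_eq
  · refine (i0.hasSum_range_iff (f := fun mn : ℤ × ℤ =>
      auxW r mn.1 * (x * y) ^ mn.1 * (auxW r mn.2 * (x / y) ^ mn.2))).mpr ?_
    convert aux_hasSum_mul (auxOd_summable hr hr1 hx) (auxEv_summable hr hr1 hy)
      ((r : ℂ)⁻¹ * x) using 1
    swap
    · rfl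
    funext ⟨a, b⟩
    simp only [Function.comp, f0]
    rw [aux_term hr hx hy]
    rw [show a + 1 + b + (a + 1 - b) = 2 * (a + 1) by ring,
      show a + 1 + b - (a + 1 - b) = 2 * b by ring,
      show 2 * (a + 1 + b) ^ 2 - 2 * (a + 1 + b) + (2 * (a + 1 - b) ^ 2 - 2 * (a + 1 - b))
        = -1 + (2 * a + 1) ^ 2 + (2 * b) ^ 2 by ring, zpow_add₀ hr', zpow_add₀ hr',
      zpow_neg_one, (even_two_mul (a + 1)).neg_one_zpow,
      show 2 * (a + 1) = 2 * a + 1 + 1 by ring, zpow_add_one₀ hx (2 * a + 1)]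
    ring
  · refine (i1.hasSum_range_iff (f := fun mn : ℤ × ℤ =>
      auxW r mn.1 * (x * y) ^ mn.1 * (auxW r mn.2 * (x / y) ^ mn.2))).mpr ?_
    convert aux_hasSum_mul (auxEv_summable hr hr1 hx) (auxOd_summable hr hr1 hy)
      (-((r : ℂ)⁻¹ * x)) using 1
    swap
    · rfl
    funext ⟨a, b⟩
    simp only [Function.comp, f1]
    rw [aux_term hr hx hy]
    rw [show a + b + 1 + (a - b) = 2 * a + 1 by ring,
      show a + b + 1 - (a - b) = 2 * b + 1 by ring,
      show 2 * (a + b + 1) ^ 2 - 2 * (a + b + 1) + (2 * (a - b) ^ 2 - 2 * (a - b))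
        = -1 + (2 * a) ^ 2 + (2 * b + 1) ^ 2 by ring, zpow_add₀ hr', zpow_add₀ hr',
      zpow_neg_one, (odd_two_mul_add_one a).neg_one_zpow, zpow_add_one₀ hx (2 * a)]
    ring

lemma aux_exists_r {p : ℝ} (hp0 : 0 < p) (hp1 : p < 1) : ∃ r : ℝ, 0 < r ∧ r < 1 ∧ r ^ 4 = p := by
  refine ⟨p ^ (1 / 4 : ℝ), Real.rpow_pos_of_pos hp0 _,
    Real.rpow_lt_one hp0.le hp1 (by norm_num), ?_⟩
  rw [← Real.rpow_natCast, ← Real.rpow_mul hp0.le]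
  norm_num

/-- The three-term (Weierstrass / Fay) identity. -/
lemma theta_three_term {p : ℝ} (hp0 : 0 < p) (hp1 : p < 1) {x y u v : ℂ}
    (hx : x ≠ 0) (hy : y ≠ 0) (hu : u ≠ 0) (hv : v ≠ 0) :
    v * (theta p (x * y) * theta p (x / y) * (theta p (u * v) * theta p (u / v))) +
      u * (theta p (x * u) * theta p (x / u) * (theta p (v * y) * theta p (v / y))) =
      v * (theta p (x * v) * theta p (x / v) * (theta p (u * y) * theta p (u / y))) := by
  obtain ⟨r, hr, hr1, rfl⟩ := aux_exists_r hp0 hp1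
  obtain ⟨c, hc⟩ := aux_theta hr hr1
  have key : ∀ a b : ℂ, a ≠ 0 → b ≠ 0 → theta (r ^ 4) (a * b) * theta (r ^ 4) (a / b) =
      c ^ 2 * ((r : ℂ)⁻¹ * a * (auxOd r a * auxEv r b) +
        -((r : ℂ)⁻¹ * a) * (auxEv r a * auxOd r b)) := by
    intro a b ha hb
    rw [hc _ (mul_ne_zero ha hb), hc _ (div_ne_zero ha hb), ← aux_prod hr hr1 ha hb]
    ring
  rw [key x y hx hy, key u v hu hv, key x u hx hu, key v y hv hy, key x v hx hv, key u y hu hy]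
  ring

lemma theta_inv_s12 {p : ℝ} (hp0 : 0 < p) (hp1 : p < 1) {z : ℂ} (hz : z ≠ 0) :
    theta p z = -z * theta p z⁻¹ := by
  obtain ⟨r, hr, hr1, rfl⟩ := aux_exists_r hp0 hp1
  obtain ⟨c, hc⟩ := aux_theta hr hr1
  have hr' : (r : ℂ) ≠ 0 := by exact_mod_cast hr.ne'
  rw [hc z hz, hc _ (inv_ne_zero hz), ← (Equiv.subLeft (1 : ℤ)).tsum_eq (fun m => auxW r m * z ^ m)]
  have : ∀ m : ℤ, auxW r (Equiv.subLeft (1 : ℤ) m) * z ^ (Equiv.subLeft (1 : ℤ) m) =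
      -z * (auxW r m * z⁻¹ ^ m) := by
    intro m
    unfold auxW
    rw [Equiv.subLeft_apply, zpow_sub₀ hz, zpow_sub₀ (by norm_num : (-1 : ℂ) ≠ 0),
      show 2 * (1 - m) ^ 2 - 2 * (1 - m) = 2 * m ^ 2 - 2 * m by ring, inv_zpow, zpow_one, zpow_one]
    rcases Int.even_or_odd m with h | h
    · rw [h.neg_one_zpow]; ring
    · rw [h.neg_one_zpow]; ring
  simp only [this]
  rw [tsum_mul_left]
  ring

lemma theta_one (p : ℝ) : theta p 1 = 0 := by
  unfold theta
  exact tprod_of_exists_eq_zero ⟨0, by simp⟩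

lemma qp_add (q : ℝ) (a b : ℂ) : qp q (a + b) = qp q a * qp q b := by
  unfold qp; rw [add_mul, Complex.exp_add]

lemma qp_sub (q : ℝ) (a b : ℂ) : qp q (a - b) = qp q a / qp q b := by
  unfold qp; rw [sub_mul, Complex.exp_sub]

lemma qp_ne (q : ℝ) (a : ℂ) : qp q a ≠ 0 := Complex.exp_ne_zero _

lemma qp_neg (q : ℝ) (a : ℂ) : qp q (-a) = (qp q a)⁻¹ := by
  unfold qp; rw [neg_mul, Complex.exp_neg]

lemma qp_zero (q : ℝ) : qp q 0 = 1 := by simp [qp]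

lemma aux_core {p : ℝ} (hp0 : 0 < p) (hp1 : p < 1) (q : ℝ) (k lam om z : ℂ) (hz : z ≠ 0) :
    theta p (z * qp q (om - 2 * k + 3)) * theta p (z * qp q (-om + 2 * k + 1)) *
        (theta p (qp q (-2 * (lam + 1 - om + k))) * theta p (qp q (-2 * (lam + 1 + 1) - 2 * k))) +
      qp q (-2 * (lam + 2) - 2 * k) *
        (theta p (z * qp q (-2 * (lam + 1) + om - 2 * (k - 1) - 1)) *
          theta p (z * qp q (2 * (lam + 1 + 1) - om + 2 * k + 1)) *
          (theta p (qp q (2 * (om - k + 1))) * theta p (qp q (2 * k)))) =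
      theta p (z * qp q (om + 3)) * theta p (z * qp q (1 - om)) *
        (theta p (qp q (-2 * (lam + 2))) * theta p (qp q (-2 * (lam - om + 2 * k + 1)))) := by
  have h := theta_three_term hp0 hp1 (x := z * qp q 2) (y := qp q (om - 2 * k + 1))
    (u := qp q (-(2 * lam + 3 - om + 2 * k))) (v := qp q (om + 1))
    (mul_ne_zero hz (qp_ne _ _)) (qp_ne _ _) (qp_ne _ _) (qp_ne _ _)
  simp only [mul_assoc z, mul_div_assoc z, ← qp_add, ← qp_sub] at h
  have e : qp q (-2 * (lam + 2) - 2 * k) =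
      qp q (-(2 * lam + 3 - om + 2 * k)) / qp q (om + 1) := by
    rw [← qp_sub]; ring_nf
  have hv := qp_ne q (om + 1)
  rw [e]
  apply mul_left_cancel₀ hv
  rw [mul_add, ← mul_assoc (qp q (om + 1)) (_ / _), mul_div_cancel₀ _ hv]
  ring_nf at h ⊢
  exact h

/-- The quantum determinant acts in the dynamical representation `π^ω` by the
scalar `q^ω θ(z q^{1−ω})/θ(z q^{1+ω})` (which is `1` for `ω = 0`):
`(F(λ)/F(λ−ω+2k)) [D_k(λ,z) A_k(λ+1,q²z) − B_{k−1}(λ,z) C_k(λ+1,q²z)]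
  = q^ω θ(z q^{1−ω})/θ(z q^{1+ω})`, where for `k = 0` the subtracted term is `0`
(as `C_0 = 0`). -/
theorem dynrep_det_action (p q : ℝ) (hp0 : 0 < p) (hp1 : p < 1) (hq0 : 0 < q) (hq1 : q < 1)
    (k : ℕ) (lam om z : ℂ) (hz : z ≠ 0)
    (h1 : theta p (qp q (-2 * (lam + 1))) ≠ 0)
    (h2 : theta p (qp q (-2 * (lam + 2))) ≠ 0)
    (h3 : theta p (z * qp q (om + 1)) ≠ 0)
    (h4 : theta p (qp q 2 * z * qp q (om + 1)) ≠ 0)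
    (h5 : theta p (qp q 2) ≠ 0)
    (h6 : theta p (qp q (2 * (lam + 2))) ≠ 0)
    (h7 : theta p (z * qp q (1 + om)) ≠ 0)
    (h8 : Fdet p q (lam - om + 2 * (k : ℂ)) ≠ 0) :
    Fdet p q lam / Fdet p q (lam - om + 2 * (k : ℂ)) *
        (Dk p q om k lam z * Ak p q om k (lam + 1) (qp q 2 * z) -
          Bk p q om (k - 1) lam z * Ck p q om k (lam + 1) (qp q 2 * z)) =
      qp q om * theta p (z * qp q (1 - om)) / theta p (z * qp q (1 + om)) := by
  have core := aux_core hp0 hp1 q k lam om z hz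
  have hB : Bk p q om (k - 1) lam z * Ck p q om k (lam + 1) (qp q 2 * z) =
      -qp q (-2 * (lam + 2)) * (theta p (z * qp q (-2 * (lam + 1) + om - 2 * (k - 1) - 1)) *
          theta p (z * qp q (2 * (lam + 1 + 1) - om + 2 * k + 1)) *
          (theta p (qp q (2 * (om - k + 1))) * theta p (qp q (2 * k)))) /
        (theta p (qp q (-2 * (lam + 1))) * theta p (z * qp q (om + 1)) *
          (theta p (qp q (-2 * (lam + 2))) * theta p (qp q 2 * z * qp q (om + 1)))) := by
    rcases Nat.eq_zero_or_pos k with h0 | h0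
    · subst h0
      simp [Ck, qp_zero, theta_one]
    · have hk : ((k - 1 : ℕ) : ℂ) = (k : ℂ) - 1 := by
        rw [Nat.cast_sub h0]; simp
      have hinv : theta p (qp q (2 * (lam + 1 + 1))) =
          -qp q (2 * (lam + 2)) * theta p (qp q (-2 * (lam + 2))) := by
        rw [theta_inv_s12 hp0 hp1 (qp_ne _ _), ← qp_neg]
        ring_nf
      have harg : qp q 2 * z * qp q (2 * (lam + 1 + 1) - om + 2 * (k : ℂ) - 1) =
          z * qp q (2 * (lam + 1 + 1) - om + 2 * k + 1) := by
        rw [mul_comm _ z, mul_assoc, ← qp_add]; ring_nf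
      have hq1' : qp q (-2 * (lam + 2)) = (qp q (2 * (lam + 2)))⁻¹ := by
        rw [← qp_neg]; ring_nf
      have hq2 := qp_ne q (2 * (lam + 2))
      have hq3 := qp_ne q ((k : ℂ) - 1)
      unfold Bk Ck
      rw [if_neg (by omega), hk, hinv, harg, qp_neg]
      generalize theta p (qp q (-2 * (lam + 2))) = T at *
      rw [hq1']
      field_simp
  have hA : Dk p q om k lam z * Ak p q om k (lam + 1) (qp q 2 * z) =
      qp q (2 * k) * (theta p (z * qp q (om - 2 * k + 3)) *
        theta p (z * qp q (-om + 2 * k + 1)) *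
        (theta p (qp q (-2 * (lam + 1 - om + k))) *
          theta p (qp q (-2 * (lam + 1 + 1) - 2 * k)))) /
        (theta p (qp q (-2 * (lam + 1))) * theta p (z * qp q (om + 1)) *
          (theta p (qp q (-2 * (lam + 2))) * theta p (qp q 2 * z * qp q (om + 1)))) := by
    have harg : qp q 2 * z * qp q (om - 2 * (k : ℂ) + 1) = z * qp q (om - 2 * k + 3) := by
      rw [mul_comm _ z, mul_assoc, ← qp_add]; ring_nf
    unfold Dk Ak
    rw [harg, show -2 * (lam + 2) = -2 * (lam + 1 + 1) by ring]
    ring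
  have h4' : qp q 2 * z * qp q (om + 1) = z * qp q (om + 3) := by
    rw [mul_comm _ z, mul_assoc, ← qp_add]; ring_nf
  have hqq : qp q (-2 * (lam + 2)) = qp q (2 * k) * qp q (-2 * (lam + 2) - 2 * k) := by
    rw [← qp_add]; ring_nf
  have hmain : Dk p q om k lam z * Ak p q om k (lam + 1) (qp q 2 * z) -
      Bk p q om (k - 1) lam z * Ck p q om k (lam + 1) (qp q 2 * z) =
      qp q (2 * k) * (theta p (z * qp q (om + 3)) * theta p (z * qp q (1 - om)) *
        (theta p (qp q (-2 * (lam + 2))) * theta p (qp q (-2 * (lam - om + 2 * k + 1))))) /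
        (theta p (qp q (-2 * (lam + 1))) * theta p (z * qp q (om + 1)) *
          (theta p (qp q (-2 * (lam + 2))) * theta p (qp q 2 * z * qp q (om + 1)))) := by
    rw [hA, hB, ← core, ← sub_div]
    congr 1
    rw [hqq]
    ring
  rw [hmain, h4']
  rw [h4'] at h4
  unfold Fdet at h8 ⊢
  have h8' := right_ne_zero_of_mul h8
  have hq : qp q lam * qp q (2 * k) = qp q om * qp q (lam - om + 2 * k) := by
    rw [← qp_add, ← qp_add]; ring_nf
  have hq4 := qp_ne q (lam - om + 2 * k)
  rw [show (1 : ℂ) + om = om + 1 by ring]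
  generalize theta p (qp q (-2 * (lam + 2))) = T2 at *
  generalize theta p (qp q (-2 * (lam + 1))) = T1 at *
  generalize theta p (qp q (-2 * (lam - om + 2 * k + 1))) = T3 at *
  generalize theta p (z * qp q (om + 3)) = T4 at *
  generalize theta p (z * qp q (om + 1)) = T5 at *
  generalize theta p (z * qp q (1 - om)) = T6 at *
  generalize qp q (lam - om + 2 * k) = X at *
  field_simp
  linear_combination T6 * hq

end
end
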